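/- arXiv:0810.5373 — 6 statements merged into one kernel-verified Lean document; each statement's English description precedes it below -/
import Mathlib

section
/- Fix three distinct elements i, j, k of P. Then the Keel module V_P is generated, as a ℤ-module, by the images of the basis elements e_S with i ∈ S and 2 ≤ |S| ≤ n−3, together with the image of e_{{j,k}}. (This is the generation step in the proof of Proposition 4.2: every class e_{{s,t}} with s ≠ i, t ≠ i, {s,t} ≠ {j,k} is congruent, modulo the submodule generated by the listed elements, to 0.) -/
/-- `B(P)`: the set of subsets `S ⊆ P` with `2 ≤ |S| ≤ n - 2`, as a subtype. -/
abbrev KeelB (P : Type*) [Fintype P] [DecidableEq P] : Type _ :=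
  {S : Finset P // 2 ≤ S.card ∧ S.card ≤ Fintype.card P - 2}

/-- The complement operation on `B(P)`. -/
def KeelB.compl {P : Type*} [Fintype P] [DecidableEq P] (S : KeelB P) : KeelB P :=
  ⟨(S : Finset P)ᶜ, by
    have h1 := S.2.1
    have h2 := S.2.2
    have h3 : (S : Finset P).card ≤ Fintype.card P := Finset.card_le_univ _
    rw [Finset.card_compl]
    omega⟩

/-- The sum `Σ_{S ∈ B(P), p,q ∈ S, r,s ∉ S} e_S` in the free ℤ-module on `B(P)`. -/
noncomputable def keelQuad {P : Type*} [Fintype P] [DecidableEq P] (p q r s : P) : KeelB P →₀ ℤ :=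
  ∑ S ∈ Finset.univ.filter
      (fun S : KeelB P =>
        p ∈ (S : Finset P) ∧ q ∈ (S : Finset P) ∧ r ∉ (S : Finset P) ∧ s ∉ (S : Finset P)),
    Finsupp.single S 1

/-- The defining relations of the Keel module: (i) `e_S - e_{P∖S}` for `S ∈ B(P)`;
(ii) the four-point relations for every quadruple of distinct elements of `P`. -/
def keelRels (P : Type*) [Fintype P] [DecidableEq P] : Set (KeelB P →₀ ℤ) :=
  (Set.range fun S : KeelB P => Finsupp.single S 1 - Finsupp.single S.compl 1) ∪
  {x | ∃ p q r s : P, p ≠ q ∧ p ≠ r ∧ p ≠ s ∧ q ≠ r ∧ q ≠ s ∧ r ≠ s ∧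
      (x = keelQuad p q r s - keelQuad p r q s ∨ x = keelQuad p q r s - keelQuad p s q r)}

/-- The Keel module `V_P`: the free ℤ-module on `B(P)` modulo the Keel relations. -/
abbrev KeelModule (P : Type*) [Fintype P] [DecidableEq P] : Type _ :=
  (KeelB P →₀ ℤ) ⧸ Submodule.span ℤ (keelRels P)

/-- The image of the basis element `e_S` in the Keel module. -/
noncomputable def keelClass {P : Type*} [Fintype P] [DecidableEq P] (S : KeelB P) : KeelModule P :=
  Submodule.Quotient.mk (Finsupp.single S 1)

theorem keelClass_compl {P : Type*} [Fintype P] [DecidableEq P] (S : KeelB P) :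
    keelClass S.compl = keelClass S := by
  symm
  unfold keelClass
  rw [Submodule.Quotient.eq]
  exact Submodule.subset_span (Or.inl ⟨S, rfl⟩)

theorem keel_quad_mem {P : Type*} [Fintype P] [DecidableEq P]
    (i : P) (M : Submodule ℤ (KeelModule P))
    (hM : ∀ S : KeelB P, i ∈ (S : Finset P) → (S : Finset P).card ≤ Fintype.card P - 3 →
      keelClass S ∈ M)
    (a b c : P) (hib : i ≠ b) (hic : i ≠ c) (hab : a ≠ b) (hac : a ≠ c) (hbc : b ≠ c)
    (T : KeelB P) (hT : (T : Finset P) = {b, c}) :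
    (Submodule.Quotient.mk (keelQuad i a b c) : KeelModule P) - keelClass T ∈ M := by
  have hmem : T.compl ∈ Finset.univ.filter
      (fun S : KeelB P =>
        i ∈ (S : Finset P) ∧ a ∈ (S : Finset P) ∧ b ∉ (S : Finset P) ∧ c ∉ (S : Finset P)) := by
    simp [KeelB.compl, hT, hib, hic, hab, hac]
  have h1 : (Submodule.Quotient.mk (keelQuad i a b c) : KeelModule P)
      = ∑ S ∈ Finset.univ.filter
      (fun S : KeelB P =>
        i ∈ (S : Finset P) ∧ a ∈ (S : Finset P) ∧ b ∉ (S : Finset P) ∧ c ∉ (S : Finset P)),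
        keelClass S := by
    unfold keelQuad keelClass
    exact map_sum (Submodule.mkQ (Submodule.span ℤ (keelRels P))) _ _
  rw [h1, ← Finset.add_sum_erase _ _ hmem, keelClass_compl, add_sub_cancel_left]
  refine Submodule.sum_mem _ fun S hS => ?_
  simp only [Finset.mem_erase, Finset.mem_filter, Finset.mem_univ, true_and] at hS
  obtain ⟨hne, hi, ha, hb, hc⟩ := hS
  refine hM S hi ?_
  have hsub : (S : Finset P) ⊂ (T.compl : Finset P) := by
    refine Finset.ssubset_iff_subset_ne.2 ⟨?_, fun h => hne (Subtype.ext h)⟩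
    intro x hx
    simp only [KeelB.compl, hT, Finset.mem_compl, Finset.mem_insert, Finset.mem_singleton]
    rintro (rfl | rfl) <;> contradiction
  have := Finset.card_lt_card hsub
  have h2 := T.compl.2.2
  omega

theorem keel_step {P : Type*} [Fintype P] [DecidableEq P]
    (i : P) (M : Submodule ℤ (KeelModule P))
    (hM : ∀ S : KeelB P, i ∈ (S : Finset P) → (S : Finset P).card ≤ Fintype.card P - 3 →
      keelClass S ∈ M)
    (a b c : P) (hia : i ≠ a) (hib : i ≠ b) (hic : i ≠ c) (hab : a ≠ b) (hac : a ≠ c) (hbc : b ≠ c)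
    (T U : KeelB P) (hT : (T : Finset P) = {b, c}) (hU : (U : Finset P) = {a, c})
    (h : keelClass T ∈ M) : keelClass U ∈ M := by
  have h1 := keel_quad_mem i M hM a b c hib hic hab hac hbc T hT
  have h2 := keel_quad_mem i M hM b a c hia hic hab.symm hbc hac U hU
  have h3 : (Submodule.Quotient.mk (keelQuad i a b c) : KeelModule P)
      = Submodule.Quotient.mk (keelQuad i b a c) := by
    rw [Submodule.Quotient.eq]
    exact Submodule.subset_span (Or.inr ⟨i, a, b, c, hia, hib, hic, hab, hac, hbc, Or.inl rfl⟩)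
  rw [← h3] at h2
  simpa using M.sub_mem (M.add_mem h1 h) h2

/-- Generation step of Proposition 4.2: the classes `δ_S` with `i ∈ S` and
`2 ≤ |S| ≤ n - 3`, together with `δ_{{j,k}}`, generate the Keel module over ℤ. -/
theorem keelModule_generation (P : Type*) [Fintype P] [DecidableEq P]
    (hn : 4 ≤ Fintype.card P) (i j k : P) (hij : i ≠ j) (hik : i ≠ k) (hjk : j ≠ k) :
    Submodule.span ℤ
      ((keelClass '' {S : KeelB P | i ∈ (S : Finset P) ∧
          (S : Finset P).card ≤ Fintype.card P - 3}) ∪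
        {keelClass (⟨{j, k}, by rw [Finset.card_pair hjk]; omega⟩ : KeelB P)}) = ⊤ := by
  set M := Submodule.span ℤ
      ((keelClass '' {S : KeelB P | i ∈ (S : Finset P) ∧
          (S : Finset P).card ≤ Fintype.card P - 3}) ∪
        {keelClass (⟨{j, k}, by rw [Finset.card_pair hjk]; omega⟩ : KeelB P)}) with hMdef
  have hM : ∀ S : KeelB P, i ∈ (S : Finset P) → (S : Finset P).card ≤ Fintype.card P - 3 →
      keelClass S ∈ M := fun S h1 h2 => Submodule.subset_span (Or.inl ⟨S, ⟨h1, h2⟩, rfl⟩)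
  have hJ : keelClass (⟨{j, k}, by rw [Finset.card_pair hjk]; omega⟩ : KeelB P) ∈ M :=
    Submodule.subset_span (Or.inr rfl)
  have hcard : ∀ a b : P, a ≠ b → 2 ≤ ({a, b} : Finset P).card ∧
      ({a, b} : Finset P).card ≤ Fintype.card P - 2 := by
    intro a b hab
    rw [Finset.card_pair hab]; omega
  -- pairs sharing the element k
  have hk : ∀ a (hak : a ≠ k), i ≠ a → keelClass (⟨{a, k}, hcard a k hak⟩ : KeelB P) ∈ M := by
    intro a hak hia
    by_cases haj : a = j
    · subst haj; exact hJ
    · exact keel_step i M hM a j k hia hij hik haj hak hjk _ _ rfl rfl hJ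
  have hpair : ∀ a b (hab : a ≠ b), i ≠ a → i ≠ b →
      keelClass (⟨{a, b}, hcard a b hab⟩ : KeelB P) ∈ M := by
    intro a b hab hia hib
    by_cases hbk : b = k
    · subst hbk; exact hk a hab hia
    by_cases hak : a = k
    · subst hak
      have := hk b hbk hib
      convert this using 3
      exact Finset.pair_comm _ _
    · exact keel_step i M hM a k b hia hik hib hak hab (Ne.symm hbk) _ _
        (Finset.pair_comm _ _) rfl (hk b hbk hib)
  have hout : ∀ S : KeelB P, i ∉ (S : Finset P) → keelClass S ∈ M := by
    intro S hS
    by_cases h2 : (S : Finset P).card = 2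
    · obtain ⟨a, b, hab, h⟩ := Finset.card_eq_two.1 h2
      have hia : i ≠ a := by rintro rfl; simp [h] at hS
      have hib : i ≠ b := by rintro rfl; simp [h] at hS
      have := hpair a b hab hia hib
      convert this using 2
      exact Subtype.ext h
    · rw [← keelClass_compl]
      apply hM
      · simpa [KeelB.compl] using hS
      · have := S.2.1
        simp only [KeelB.compl, Finset.card_compl]
        omega
  have hall : ∀ S : KeelB P, keelClass S ∈ M := by
    intro S
    by_cases hS : i ∈ (S : Finset P)
    · rw [← keelClass_compl]
      apply hout
      simpa [KeelB.compl] using hS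
    · exact hout S hS
  rw [eq_top_iff]
  rintro x -
  obtain ⟨f, rfl⟩ := Submodule.Quotient.mk_surjective _ x
  induction f using Finsupp.induction_linear with
  | zero => exact M.zero_mem
  | add f g hf hg => exact M.add_mem hf hg
  | single S n =>
    have h : (Submodule.Quotient.mk (Finsupp.single S n) : KeelModule P) = n • keelClass S := by
      unfold keelClass
      rw [← Submodule.Quotient.mk_smul]
      simp
    rw [h]
    exact M.smul_mem _ (hall S)
end

section
/- The Keel module V_P is a free ℤ-module of rank 2^{n−1} − n(n−1)/2 − 1; equivalently, the ℚ-vector space V_P ⊗ ℚ has dimension 2^{n−1} − C(n,2) − 1. (This is the rank statement of Proposition 4.2: rank H²( M̄_{0,P}; ℤ) = rank A¹( M̄_{0,P}) = 2^{n−1} − C(n,2) − 1.) -/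
section KeelAux
variable {P : Type*} [Fintype P] [DecidableEq P] {M N : Type*} [AddCommGroup M] [AddCommGroup N]

def kQ (c : Finset P → M) (p q r s : P) : M :=
  ∑ S : Finset P, if p ∈ S ∧ q ∈ S ∧ r ∉ S ∧ s ∉ S then c S else 0

def kA (w : P) (c : Finset P → M) (p q : P) : M :=
  ∑ S : Finset P, if p ∈ S ∧ q ∈ S ∧ w ∉ S then c S else 0

def kA3 (w : P) (c : Finset P → M) (p q r : P) : M :=
  ∑ S : Finset P, if p ∈ S ∧ q ∈ S ∧ r ∈ S ∧ w ∉ S then c S else 0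

theorem kA_comm (w : P) (c : Finset P → M) (p q : P) : kA w c p q = kA w c q p := by
  unfold kA
  refine Finset.sum_congr rfl fun S _ => ?_
  by_cases h1 : p ∈ S <;> by_cases h2 : q ∈ S <;> simp [h1, h2]

theorem kA3_comm (w : P) (c : Finset P → M) (p q r : P) : kA3 w c p q r = kA3 w c p r q := by
  unfold kA3
  refine Finset.sum_congr rfl fun S _ => ?_
  by_cases h1 : r ∈ S <;> by_cases h2 : q ∈ S <;> simp [h1, h2]

theorem kA3_rot (w : P) (c : Finset P → M) (p q r : P) : kA3 w c p q r = kA3 w c q r p := by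
  unfold kA3
  refine Finset.sum_congr rfl fun S _ => ?_
  by_cases h1 : r ∈ S <;> by_cases h2 : q ∈ S <;> by_cases h3 : p ∈ S <;> simp [h1, h2, h3]

theorem kQ_swap1 (c : Finset P → M) (p q r s : P) : kQ c p q r s = kQ c q p r s := by
  unfold kQ
  refine Finset.sum_congr rfl fun S _ => ?_
  by_cases h1 : p ∈ S <;> by_cases h2 : q ∈ S <;> simp [h1, h2]

theorem kQ_swap2 (c : Finset P → M) (p q r s : P) : kQ c p q r s = kQ c p q s r := by
  unfold kQ
  refine Finset.sum_congr rfl fun S _ => ?_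
  by_cases h1 : r ∈ S <;> by_cases h2 : s ∈ S <;> simp [h1, h2]

theorem kQ_compl (c : Finset P → M) (hc : ∀ S, c Sᶜ = c S) (p q r s : P) :
    kQ c p q r s = kQ c r s p q := by
  unfold kQ
  refine Fintype.sum_equiv (Equiv.ofBijective (fun S : Finset P => Sᶜ) compl_bijective) _ _
    fun S => ?_
  simp only [Equiv.ofBijective_apply, Finset.mem_compl, hc, not_not]
  by_cases h1 : r ∈ S <;> by_cases h2 : s ∈ S <;> simp [h1, h2]

theorem kQ_inf (w : P) (c : Finset P → M) (p q r : P) :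
    kQ c p q r w = kA w c p q - kA3 w c p q r := by
  unfold kQ kA kA3
  rw [← Finset.sum_sub_distrib]
  refine Finset.sum_congr rfl fun S _ => ?_
  by_cases h1 : p ∈ S <;> by_cases h2 : q ∈ S <;> by_cases h3 : r ∈ S <;>
    by_cases h4 : w ∈ S <;> simp [h1, h2, h3, h4]

theorem kQ_fin (w : P) (c : Finset P → M) (hc : ∀ S, c Sᶜ = c S) (p q r s : P) :
    kQ c p q r s + kA3 w c p q r + kA3 w c p q s + kA3 w c r s p + kA3 w c r s q
      = kA w c p q + kA w c r s +
        2 • ∑ S : Finset P, if p ∈ S ∧ q ∈ S ∧ r ∈ S ∧ s ∈ S ∧ w ∉ S then c S else 0 := by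
  have h : kQ c p q r s =
      (∑ S : Finset P, if p ∈ S ∧ q ∈ S ∧ r ∉ S ∧ s ∉ S ∧ w ∉ S then c S else 0) +
      (∑ S : Finset P, if p ∉ S ∧ q ∉ S ∧ r ∈ S ∧ s ∈ S ∧ w ∉ S then c S else 0) := by
    have h2 : (∑ S : Finset P, if p ∉ S ∧ q ∉ S ∧ r ∈ S ∧ s ∈ S ∧ w ∉ S then c S else 0) =
        ∑ S : Finset P, if p ∈ S ∧ q ∈ S ∧ r ∉ S ∧ s ∉ S ∧ w ∈ S then c S else 0 := by
      refine Fintype.sum_equiv (Equiv.ofBijective (fun S : Finset P => Sᶜ) compl_bijective) _ _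
        fun S => ?_
      simp only [Equiv.ofBijective_apply, Finset.mem_compl, hc, not_not]
    rw [h2, ← Finset.sum_add_distrib]
    unfold kQ
    refine Finset.sum_congr rfl fun S _ => ?_
    by_cases h4 : w ∈ S <;> simp [h4]
  rw [h]
  unfold kA kA3
  rw [Finset.smul_sum]
  simp only [← Finset.sum_add_distrib]
  refine Finset.sum_congr rfl fun S _ => ?_
  by_cases h1 : p ∈ S <;> by_cases h2 : q ∈ S <;> by_cases h3 : r ∈ S <;>
    by_cases h4 : s ∈ S <;> by_cases h5 : w ∈ S <;> simp [h1, h2, h3, h4, h5, two_nsmul, add_assoc]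

theorem kQ_eq (w : P) (c : Finset P → M) (hc : ∀ S, c Sᶜ = c S) (a : M)
    (ha : ∀ p q, p ≠ q → p ≠ w → q ≠ w → kA w c p q = a)
    (p q r s : P) (hpq : p ≠ q) (hpr : p ≠ r) (hps : p ≠ s) (hqr : q ≠ r) (hqs : q ≠ s)
    (hrs : r ≠ s) : kQ c p q r s = kQ c p r q s := by
  have key : ∀ p q r, p ≠ q → p ≠ r → q ≠ r → p ≠ w → q ≠ w → r ≠ w →
      kQ c p q r w = kQ c p r q w := by
    intro p q r h1 h2 h3 h4 h5 h6
    rw [kQ_inf, kQ_inf, ha _ _ h1 h4 h5, ha _ _ h2 h4 h6, kA3_comm]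
  by_cases h1 : s = w
  · subst h1; exact key p q r hpq hpr hqr hps hqs hrs
  by_cases h2 : r = w
  · subst h2
    rw [kQ_compl c hc p r q s, kQ_swap1 c q s, kQ_swap1 c p q, kQ_swap2 c q p,
      kQ_swap2 c q p s r, kQ_swap2 c q p r s, kQ_swap1 c s q]
    exact key q p s hpq.symm hqs hps hqr hpr (Ne.symm hrs)
  by_cases h3 : q = w
  · subst h3
    rw [kQ_compl c hc p q r s, kQ_swap1 c r s, kQ_swap1 c p r, kQ_swap2 c r p q s,
      kQ_swap1 c s r]
    exact (key r p s hpr.symm hrs hps (Ne.symm hqr) hpq (Ne.symm hqs)).symm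
  by_cases h4 : p = w
  · subst h4
    rw [kQ_compl c hc p q r s, kQ_compl c hc p r q s, kQ_swap1 c r s, kQ_swap1 c q s,
      kQ_swap2 c s r, kQ_swap2 c s q]
    exact key s r q (Ne.symm hrs) (Ne.symm hqs) (Ne.symm hqr) h1 h2 h3
  have e1 := kQ_fin w c hc p q r s
  have e2 := kQ_fin w c hc p r q s
  rw [ha _ _ hpq h4 h3, ha _ _ hrs h2 h1] at e1
  rw [ha _ _ hpr h4 h2, ha _ _ hqs h3 h1] at e2
  have e3 : (∑ S : Finset P, if p ∈ S ∧ r ∈ S ∧ q ∈ S ∧ s ∈ S ∧ w ∉ S then c S else 0)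
      = ∑ S : Finset P, if p ∈ S ∧ q ∈ S ∧ r ∈ S ∧ s ∈ S ∧ w ∉ S then c S else 0 := by
    refine Finset.sum_congr rfl fun S _ => ?_
    by_cases h1 : r ∈ S <;> by_cases h2 : q ∈ S <;> simp [h1, h2]
  rw [e3, ← e1, kA3_comm w c p r q, kA3_rot w c r s p, kA3_rot w c s p r, kA3_rot w c r s q,
    kA3_rot w c s q r, kA3_rot w c q s p, kA3_rot w c s p q] at e2
  have e4 := kA3_comm w c q r s
  rw [kA3_comm w c q s r] at e2
  have : kQ c p r q s - kQ c p q r s = 0 := by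
    rw [← sub_eq_zero] at e2
    rw [← e2]; abel
  exact (sub_eq_zero.mp this).symm

theorem kA_const (w : P) (c : Finset P → M)
    (hQ : ∀ p q r s : P, p ≠ q → p ≠ r → p ≠ s → q ≠ r → q ≠ s → r ≠ s →
      kQ c p q r s = kQ c p r q s)
    (p q p' q' : P) (h1 : p ≠ q) (h2 : p ≠ w) (h3 : q ≠ w)
    (h1' : p' ≠ q') (h2' : p' ≠ w) (h3' : q' ≠ w) : kA w c p q = kA w c p' q' := by
  have key : ∀ p q r, p ≠ q → p ≠ r → p ≠ w → q ≠ w → r ≠ w → kA w c p q = kA w c p r := by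
    intro p q r a1 a2 a3 a4 a5
    by_cases h : q = r
    · rw [h]
    have := hQ p q r w a1 a2 a3 h a4 a5
    rw [kQ_inf, kQ_inf, kA3_comm] at this
    exact sub_left_inj.mp this
  by_cases h : p = q'
  · subst h
    rw [kA_comm w c p']
    exact key _ _ _ h1 h1'.symm h2 h3 h2'
  · rw [key p q q' h1 h h2 h3 h3', kA_comm w c p q', kA_comm w c p' q']
    exact key _ _ _ (Ne.symm h) h1'.symm h3' h2 h2'

theorem kA_map (w : P) (f : M →+ N) (c : Finset P → M) (p q : P) :
    f (kA w c p q) = kA w (fun S => f (c S)) p q := by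
  unfold kA
  rw [map_sum]
  refine Finset.sum_congr rfl fun S _ => ?_
  split_ifs <;> simp

theorem kQ_map (f : M →+ N) (c : Finset P → M) (p q r s : P) :
    f (kQ c p q r s) = kQ (fun S => f (c S)) p q r s := by
  unfold kQ
  rw [map_sum]
  refine Finset.sum_congr rfl fun S _ => ?_
  split_ifs <;> simp

/-- decomposition of `kA` -/
theorem kA_split (w : P) (c : Finset P → M) (p q : P) (h2 : p ≠ w) (h3 : q ≠ w) :
    kA w c p q = c {p, q} +
      ∑ S : Finset P, if {p, q} ⊂ S then (if w ∉ S then c S else 0) else 0 := by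
  have : c {p, q} = ∑ S : Finset P, if S = {p, q} then c S else 0 := by simp
  rw [this, ← Finset.sum_add_distrib]
  unfold kA
  refine Finset.sum_congr rfl fun S _ => ?_
  by_cases hS : S = {p, q}
  · subst hS
    simp [Ne.symm h2, Ne.symm h3]
  · have : ({p, q} : Finset P) ⊂ S ↔ p ∈ S ∧ q ∈ S := by
      rw [Finset.ssubset_iff_subset_ne]
      simp [Finset.insert_subset_iff, Ne.symm hS]
    simp only [this, hS, if_false, zero_add]
    by_cases h1 : p ∈ S <;> by_cases h2 : q ∈ S <;> simp [h1, h2]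

abbrev kMem (S : Finset P) : Prop := 2 ≤ S.card ∧ S.card ≤ Fintype.card P - 2

theorem kMem_compl (S : Finset P) (h : kMem S) : kMem Sᶜ := KeelB.compl ⟨S, h⟩ |>.2

noncomputable def kFree (S : Finset P) : KeelB P →₀ ℤ :=
  if h : kMem S then Finsupp.single ⟨S, h⟩ 1 else 0

theorem keelQuad_eq (p q r s : P) : keelQuad p q r s = kQ kFree p q r s := by
  unfold keelQuad kQ
  rw [Finset.sum_filter]
  symm
  rw [← Finset.sum_subset (Finset.subset_univ (Finset.univ.filter (fun S : Finset P => kMem S)))]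
  · rw [Finset.sum_subtype (p := fun S => kMem S) (F := inferInstance) _ (by simp)]
    refine Finset.sum_congr rfl fun S _ => ?_
    rw [kFree, dif_pos S.2]
  · intro S _ hS
    have : ¬ kMem S := by simpa using hS
    simp [kFree, this]

noncomputable def kV (S : Finset P) : KeelModule P :=
  Submodule.Quotient.mk (kFree S)

theorem kV_compl (S : Finset P) : kV Sᶜ = kV S := by
  unfold kV kFree
  by_cases h : kMem S
  · rw [dif_pos h, dif_pos (kMem_compl S h)]
    symm
    rw [Submodule.Quotient.eq]
    exact Submodule.subset_span (Or.inl ⟨⟨S, h⟩, rfl⟩)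
  · rw [dif_neg h, dif_neg]
    intro h'
    exact h (by simpa using kMem_compl _ h')

theorem kV_Q (p q r s : P) (hpq : p ≠ q) (hpr : p ≠ r) (hps : p ≠ s) (hqr : q ≠ r) (hqs : q ≠ s)
    (hrs : r ≠ s) : kQ (kV (P := P)) p q r s = kQ kV p r q s := by
  have h : ∀ p q r s : P, kQ (kV (P := P)) p q r s =
      Submodule.Quotient.mk (keelQuad p q r s) := by
    intro p q r s
    rw [keelQuad_eq]
    exact (kQ_map (Submodule.mkQ (Submodule.span ℤ (keelRels P))).toAddMonoidHom kFree p q r s).symm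
  rw [h, h, Submodule.Quotient.eq]
  exact Submodule.subset_span (Or.inr ⟨p, q, r, s, hpq, hpr, hps, hqr, hqs, hrs, Or.inl rfl⟩)

abbrev kJ (w : P) : Type _ :=
  {T : Finset P // w ∉ T ∧ 3 ≤ T.card ∧ T.card ≤ Fintype.card P - 2}

noncomputable def kE (w : P) (T : Finset P) : Option (kJ w) →₀ ℤ :=
  if h : w ∉ T ∧ 3 ≤ T.card ∧ T.card ≤ Fintype.card P - 2 then
    Finsupp.single (some ⟨T, h⟩) 1 else 0

noncomputable def kG (w : P) (T : Finset P) : Option (kJ w) →₀ ℤ :=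
  if T.card = 2 then
    Finsupp.single none 1 - ∑ S : Finset P, if T ⊂ S then kE w S else 0
  else kE w T

noncomputable def kC (w : P) (S : Finset P) : Option (kJ w) →₀ ℤ :=
  if kMem S then kG w (if w ∈ S then Sᶜ else S) else 0

theorem kC_compl (w : P) (S : Finset P) : kC w Sᶜ = kC w S := by
  unfold kC
  have : kMem Sᶜ ↔ kMem S := ⟨fun h => by simpa using kMem_compl _ h, kMem_compl S⟩
  rw [if_congr this rfl rfl]
  by_cases h : w ∈ S <;> simp [h]

theorem kC_A (w : P) (hn : 4 ≤ Fintype.card P) (p q : P) (h1 : p ≠ q) (h2 : p ≠ w) (h3 : q ≠ w) :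
    kA w (kC w) p q = Finsupp.single none 1 := by
  rw [kA_split w _ p q h2 h3]
  have hc : ({p, q} : Finset P).card = 2 := Finset.card_pair h1
  have hm : kMem ({p, q} : Finset P) := by unfold kMem; omega
  have e : kC w {p, q} = Finsupp.single none 1 -
      ∑ S : Finset P, if {p, q} ⊂ S then kE w S else 0 := by
    unfold kC
    rw [if_pos hm, if_neg (by simp [Ne.symm h2, Ne.symm h3]), kG, if_pos hc]
  rw [e]
  have : (∑ S : Finset P, if {p, q} ⊂ S then (if w ∉ S then kC w S else 0) else 0) =
      ∑ S : Finset P, if {p, q} ⊂ S then kE w S else 0 := by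
    refine Finset.sum_congr rfl fun S _ => ?_
    by_cases hS : {p, q} ⊂ S
    · rw [if_pos hS, if_pos hS]
      have hcard := Finset.card_lt_card hS
      rw [hc] at hcard
      by_cases hw : w ∈ S
      · simp [hw, kE]
      · rw [if_pos hw, kC]
        by_cases hk : kMem S
        · rw [if_pos hk, if_neg hw, kG, if_neg (by omega)]
        · rw [if_neg hk, kE, dif_neg]
          rintro ⟨-, h5, h6⟩
          exact hk ⟨by omega, h6⟩
    · rw [if_neg hS, if_neg hS]
  rw [this]; abel

noncomputable def kPhi0 (w : P) : (KeelB P →₀ ℤ) →ₗ[ℤ] (Option (kJ w) →₀ ℤ) :=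
  Finsupp.linearCombination ℤ (fun S : KeelB P => kC w S.1)

theorem kPhi0_free (w : P) (S : Finset P) : kPhi0 w (kFree S) = kC w S := by
  unfold kFree
  split_ifs with h
  · simp [kPhi0]
  · simp [kC, h]

theorem kPhi0_quad (w : P) (p q r s : P) : kPhi0 w (keelQuad p q r s) = kQ (kC w) p q r s := by
  rw [keelQuad_eq]
  have := kQ_map (kPhi0 w).toAddMonoidHom (kFree (P := P)) p q r s
  simp only [LinearMap.toAddMonoidHom_coe, kPhi0_free] at this
  exact this

theorem kPhi0_le (w : P) (hn : 4 ≤ Fintype.card P) :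
    Submodule.span ℤ (keelRels P) ≤ LinearMap.ker (kPhi0 w) := by
  rw [Submodule.span_le]
  have hQ := kQ_eq w (kC w) (kC_compl w) _ (kC_A w hn)
  rintro x (⟨S, rfl⟩ | ⟨p, q, r, s, h1, h2, h3, h4, h5, h6, rfl | rfl⟩)
  · have : kC w S.compl.1 = kC w S.1 := kC_compl w S.1
    simp [kPhi0, this]
  · simp only [SetLike.mem_coe, LinearMap.mem_ker, map_sub, kPhi0_quad]
    rw [hQ p q r s h1 h2 h3 h4 h5 h6, sub_self]
  · simp only [SetLike.mem_coe, LinearMap.mem_ker, map_sub, kPhi0_quad]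
    rw [kQ_swap2, hQ p q s r h1 h3 h2 h5 h4 h6.symm, sub_self]

noncomputable def kPhi (w : P) (hn : 4 ≤ Fintype.card P) :
    KeelModule P →ₗ[ℤ] (Option (kJ w) →₀ ℤ) :=
  Submodule.liftQ _ (kPhi0 w) (kPhi0_le w hn)

theorem kPhi_kV (w : P) (hn : 4 ≤ Fintype.card P) (S : Finset P) :
    kPhi w hn (kV S) = kC w S := kPhi0_free w S

noncomputable def kPsi (w p q : P) : (Option (kJ w) →₀ ℤ) →ₗ[ℤ] KeelModule P :=
  Finsupp.linearCombination ℤ (fun o : Option (kJ w) => o.elim (kA w kV p q) (fun T => kV T.1))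

theorem kPsi_none (w p q : P) : kPsi w p q (Finsupp.single none 1) = kA w kV p q := by
  simp [kPsi]

theorem kPsi_E (w p q : P) (T : Finset P) : kPsi w p q (kE w T) =
    if w ∉ T ∧ 3 ≤ T.card then kV T else 0 := by
  unfold kE
  split_ifs with h h' h'
  · simp [kPsi]
  · exact absurd ⟨h.1, h.2.1⟩ h'
  · have : ¬ kMem T := fun hk => h ⟨h'.1, h'.2, hk.2⟩
    simp [kV, kFree, this]
  · simp

theorem kPsi_G (w p q : P) (h1 : p ≠ q) (h2 : p ≠ w) (h3 : q ≠ w) (T : Finset P) (hT : w ∉ T)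
    (hk : kMem T) : kPsi w p q (kG w T) = kV T := by
  unfold kG
  split_ifs with hc
  · obtain ⟨p', q', hne, rfl⟩ := Finset.card_eq_two.mp hc
    have h2' : p' ≠ w := fun h => hT (by simp [h])
    have h3' : q' ≠ w := fun h => hT (by simp [h])
    rw [map_sub, kPsi_none, kA_const w kV kV_Q p q p' q' h1 h2 h3 hne h2' h3',
      kA_split w _ p' q' h2' h3', map_sum, add_sub_assoc, ← Finset.sum_sub_distrib]
    rw [Finset.sum_eq_zero, add_zero]
    intro S _
    by_cases hS : {p', q'} ⊂ S
    · have hcard := Finset.card_lt_card hS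
      rw [hc] at hcard
      rw [if_pos hS, if_pos hS, kPsi_E]
      have : 3 ≤ S.card := hcard
      simp [this]
    · simp [hS]
  · rw [kPsi_E, if_pos ⟨hT, by have := hk.1; omega⟩]

noncomputable def kEquiv (w p q : P) (hn : 4 ≤ Fintype.card P) (h1 : p ≠ q) (h2 : p ≠ w)
    (h3 : q ≠ w) : KeelModule P ≃ₗ[ℤ] (Option (kJ w) →₀ ℤ) :=
  LinearEquiv.ofLinearMap (kPhi w hn) (kPsi w p q)
    (by
      refine Finsupp.lhom_ext' fun o => LinearMap.ext_ring ?_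
      simp only [LinearMap.comp_apply, Finsupp.lsingle_apply, LinearMap.id_apply]
      rcases o with _ | T
      · rw [kPsi_none]
        have := kA_map w (kPhi w hn).toAddMonoidHom (kV (P := P)) p q
        simp only [LinearMap.toAddMonoidHom_coe, kPhi_kV] at this
        exact this.trans (kC_A w hn p q h1 h2 h3)
      · have e : kPsi w p q (Finsupp.single (some T) 1) = kV T.1 := by simp [kPsi]
        have hT := T.2
        rw [e, kPhi_kV, kC, if_pos ⟨by omega, hT.2.2⟩, if_neg hT.1, kG, if_neg (by omega), kE,
          dif_pos hT])
    (by
      refine Submodule.linearMap_qext _ (Finsupp.lhom_ext' fun S => LinearMap.ext_ring ?_)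
      simp only [LinearMap.comp_apply, Finsupp.lsingle_apply, LinearMap.id_apply,
        Submodule.mkQ_apply]
      have e : (Submodule.Quotient.mk (Finsupp.single S 1) : KeelModule P) = kV S.1 := by
        rw [kV, kFree, dif_pos S.2]
      rw [e, kPhi_kV, kC, if_pos S.2]
      split_ifs with hw
      · rw [kPsi_G w p q h1 h2 h3 _ (by simpa using hw) (kMem_compl _ S.2), kV_compl]
      · exact kPsi_G w p q h1 h2 h3 _ hw S.2)

theorem kJ_card (w : P) (hn : 4 ≤ Fintype.card P) :
    Fintype.card (Option (kJ w)) = 2 ^ (Fintype.card P - 1) - (Fintype.card P).choose 2 - 1 := by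
  obtain ⟨m, hm⟩ : ∃ m, Fintype.card P = m + 1 := ⟨Fintype.card P - 1, by omega⟩
  have hE : (Finset.univ.erase w).card = m := by
    rw [Finset.card_erase_of_mem (Finset.mem_univ _), Finset.card_univ]; omega
  have hJ : Fintype.card (kJ w) = ∑ S ∈ (Finset.univ.erase w).powerset,
      if 3 ≤ S.card ∧ S.card ≤ m - 1 then 1 else 0 := by
    rw [← Finset.card_filter, Fintype.card_subtype]
    congr 1
    ext S
    simp only [Finset.mem_filter, Finset.mem_univ, true_and, Finset.mem_powerset,
      Finset.subset_erase, Finset.subset_univ, hm]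
    rfl
  have hk : ∀ k, (∑ S ∈ (Finset.univ.erase w).powerset, if S.card = k then 1 else 0)
      = m.choose k := by
    intro k
    rw [← Finset.card_filter, ← Finset.powersetCard_eq_filter, Finset.card_powersetCard, hE]
  have tot : (∑ S ∈ (Finset.univ.erase w).powerset, 1) = 2 ^ m := by
    rw [Finset.sum_const, Finset.card_powerset, hE]; simp
  have split : (∑ S ∈ (Finset.univ.erase w).powerset, 1) =
      Fintype.card (kJ w) + m.choose 0 + m.choose 1 + m.choose 2 + m.choose m := by
    rw [hJ, ← hk, ← hk, ← hk, ← hk m]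
    simp only [← Finset.sum_add_distrib]
    refine Finset.sum_congr rfl fun S hS => ?_
    have := Finset.card_le_card (Finset.mem_powerset.mp hS)
    rw [hE] at this
    split_ifs <;> omega
  rw [Fintype.card_option]
  generalize Fintype.card (kJ w) = j at split ⊢
  rw [hm, Nat.choose_succ_succ' m 1]
  simp only [Nat.choose_zero_right, Nat.choose_one_right, Nat.choose_self] at split
  rw [tot] at split
  simp only [Nat.add_sub_cancel, Nat.choose_one_right, Nat.reduceAdd]
  omega

end KeelAux

open TensorProduct in
/-- Rank statement of Proposition 4.2: the Keel module `V_P` is a free ℤ-module of rank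
`2^(n-1) - C(n,2) - 1`; equivalently, `V_P ⊗ ℚ` has dimension `2^(n-1) - C(n,2) - 1`. -/
theorem keelModule_rank (P : Type*) [Fintype P] [DecidableEq P]
    (hn : 4 ≤ Fintype.card P) :
    Module.Free ℤ (KeelModule P) ∧
      Module.finrank ℤ (KeelModule P)
        = 2 ^ (Fintype.card P - 1) - (Fintype.card P).choose 2 - 1 ∧
      Module.finrank ℚ (ℚ ⊗[ℤ] KeelModule P)
        = 2 ^ (Fintype.card P - 1) - (Fintype.card P).choose 2 - 1 := by
  obtain ⟨w, p, q, hwp, hwq, hpq⟩ := Fintype.two_lt_card_iff.mp (show 2 < Fintype.card P by omega)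
  have e := kEquiv w p q hn hpq hwp.symm hwq.symm
  have hF : Module.Free ℤ (KeelModule P) := Module.Free.of_equiv e.symm
  have hr : Module.finrank ℤ (KeelModule P)
        = 2 ^ (Fintype.card P - 1) - (Fintype.card P).choose 2 - 1 := by
    rw [e.finrank_eq, Module.finrank_finsupp_self, kJ_card w hn]
  refine ⟨hF, hr, ?_⟩
  rw [Module.finrank_baseChange, hr]
end

section
/- For any two pairs of distinct elements x, y ∈ P and x′, y′ ∈ P, the following identity holds in the Keel module V_P: Σ_{A∈B(P), x∉A, y∉A} (|A|−1)·e_A = Σ_{A∈B(P), x′∉A, y′∉A} (|A|−1)·e_A. (This expresses that the formula κ₁ = Σ_{A∌x,y} (|A|−1) δ_{0,A} for the kappa class on M̄_{0,P}, from part d) of Theorem 6.1, gives a well-defined element of the Keel module, independent of the auxiliary marked points x, y; it is a consequence of the defining relations of V_P.) -/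
lemma keelQuad_mk {P : Type*} [Fintype P] [DecidableEq P] (p q r s : P) :
    (Submodule.Quotient.mk (keelQuad p q r s) : KeelModule P) =
    ∑ A : KeelB P, if p ∈ (A : Finset P) ∧ q ∈ (A : Finset P) ∧ r ∉ (A : Finset P) ∧
      s ∉ (A : Finset P) then keelClass A else 0 := by
  rw [← Finset.sum_filter]
  unfold keelQuad keelClass
  rw [← Submodule.mkQ_apply, map_sum]
  rfl

lemma keelKappa_aux {P : Type*} [Fintype P] [DecidableEq P] (x y z : P) :
    (∑ A : KeelB P, if z ∈ (A : Finset P) ∧ y ∉ (A : Finset P) ∧ x ∉ (A : Finset P) then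
      (((A : Finset P).card : ℤ) - 1) • keelClass A else 0) =
    ∑ w ∈ Finset.univ.filter (fun w : P => w ≠ x ∧ w ≠ y ∧ w ≠ z),
      (Submodule.Quotient.mk (keelQuad w z y x) : KeelModule P) := by
  simp_rw [keelQuad_mk]
  rw [Finset.sum_comm]
  refine Finset.sum_congr rfl fun A _ => ?_
  split_ifs with h
  · obtain ⟨h1, h2, h3⟩ := h
    rw [← Finset.sum_filter, Finset.sum_const]
    have : (Finset.univ.filter (fun w : P => w ≠ x ∧ w ≠ y ∧ w ≠ z)).filter
        (fun w => w ∈ (A : Finset P) ∧ z ∈ (A : Finset P) ∧ y ∉ (A : Finset P) ∧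
          x ∉ (A : Finset P)) = (A : Finset P).erase z := by
      ext w
      simp only [Finset.mem_filter, Finset.mem_univ, true_and, Finset.mem_erase]
      constructor
      · tauto
      · rintro ⟨hz, hA⟩
        exact ⟨⟨fun e => h3 (e ▸ hA), fun e => h2 (e ▸ hA), hz⟩, hA, h1, h2, h3⟩
    rw [this, Finset.card_erase_of_mem h1, ← natCast_zsmul,
      Nat.cast_sub (Finset.card_pos.mpr ⟨z, h1⟩)]
    simp
  · symm
    apply Finset.sum_eq_zero
    intro w _
    rw [if_neg]
    tauto

lemma keelKappa_step {P : Type*} [Fintype P] [DecidableEq P] (x y z : P)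
    (hxy : x ≠ y) (hxz : x ≠ z) :
    (∑ A ∈ Finset.univ.filter
        (fun A : KeelB P => x ∉ (A : Finset P) ∧ y ∉ (A : Finset P)),
      (((A : Finset P).card : ℤ) - 1) • keelClass A) =
    (∑ A ∈ Finset.univ.filter
        (fun A : KeelB P => x ∉ (A : Finset P) ∧ z ∉ (A : Finset P)),
      (((A : Finset P).card : ℤ) - 1) • keelClass A) := by
  by_cases hyz : y = z
  · rw [hyz]
  have key : (∑ A : KeelB P, if z ∈ (A : Finset P) ∧ y ∉ (A : Finset P) ∧ x ∉ (A : Finset P) then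
      (((A : Finset P).card : ℤ) - 1) • keelClass A else 0) =
      (∑ A : KeelB P, if y ∈ (A : Finset P) ∧ z ∉ (A : Finset P) ∧ x ∉ (A : Finset P) then
      (((A : Finset P).card : ℤ) - 1) • keelClass A else 0) := by
    rw [keelKappa_aux, keelKappa_aux]
    refine Finset.sum_congr (by ext w; simp; tauto) fun w hw => ?_
    simp only [Finset.mem_filter, Finset.mem_univ, true_and] at hw
    obtain ⟨h1, h2, h3⟩ := hw
    rw [Submodule.Quotient.eq]
    apply Submodule.subset_span
    right
    exact ⟨w, z, y, x, h2, h3, h1, Ne.symm hyz, hxz.symm, hxy.symm, Or.inl rfl⟩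
  rw [← sub_eq_zero] at key ⊢
  rw [← key, Finset.sum_filter, Finset.sum_filter, ← Finset.sum_sub_distrib,
    ← Finset.sum_sub_distrib]
  refine Finset.sum_congr rfl fun A _ => ?_
  by_cases h1 : x ∈ (A : Finset P) <;> by_cases h2 : y ∈ (A : Finset P) <;>
    by_cases h3 : z ∈ (A : Finset P) <;> simp [h1, h2, h3]

lemma keelKappa_symm {P : Type*} [Fintype P] [DecidableEq P] (x y : P) :
    (∑ A ∈ Finset.univ.filter
        (fun A : KeelB P => x ∉ (A : Finset P) ∧ y ∉ (A : Finset P)),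
      (((A : Finset P).card : ℤ) - 1) • keelClass A) =
    (∑ A ∈ Finset.univ.filter
        (fun A : KeelB P => y ∉ (A : Finset P) ∧ x ∉ (A : Finset P)),
      (((A : Finset P).card : ℤ) - 1) • keelClass A) := by
  simp only [and_comm]

/-- The expression `κ₁ = Σ_{A ∈ B(P), x,y ∉ A} (|A| - 1) δ_A` in the Keel module is
independent of the choice of the auxiliary pair of distinct points `x, y`. -/
theorem keelKappa_welldefined (P : Type*) [Fintype P] [DecidableEq P]
    (hn : 4 ≤ Fintype.card P) (x y x' y' : P) (hxy : x ≠ y) (hxy' : x' ≠ y') :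
    (∑ A ∈ Finset.univ.filter
        (fun A : KeelB P => x ∉ (A : Finset P) ∧ y ∉ (A : Finset P)),
      (((A : Finset P).card : ℤ) - 1) • keelClass A) =
    (∑ A ∈ Finset.univ.filter
        (fun A : KeelB P => x' ∉ (A : Finset P) ∧ y' ∉ (A : Finset P)),
      (((A : Finset P).card : ℤ) - 1) • keelClass A) := by
  by_cases h : x = y'
  · subst h
    rw [keelKappa_step x y x' hxy hxy'.symm, keelKappa_symm]
  · rw [keelKappa_step x y y' hxy h, keelKappa_symm,
      keelKappa_step y' x x' (Ne.symm h) hxy'.symm, keelKappa_symm]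
end

section
/- There is a strong deformation retraction of |K| ∖ |H| onto |M|: a continuous map F : (|K| ∖ |H|) × [0,1] → |K| ∖ |H| such that F(x,0) = x for all x, F(x,1) ∈ |M| for all x, and F(y,t) = y for all y ∈ |M| and all t ∈ [0,1]. In particular |K| ∖ |H| is homotopy equivalent to |M|. (Lemma 5.4 of the paper, with the explicit retraction given by: writing x in barycentric coordinates x = Σ_{i=0}^{k} λ_i b_{a_i} with respect to a chain a_0 ⊊ ⋯ ⊊ a_k, and letting s be the least index with a_s ∈ L, set x′ = (Σ_{i=s}^{k} λ_i)^{−1} Σ_{i=s}^{k} λ_i b_{a_i} and F(x,t) = (1−t)x + t x′.) -/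
/-- The geometric realization `|K|` of a collection `K` of finite subsets of a finite
vertex set `V`: functions `f : V → ℝ` with nonnegative values summing to `1` whose
support is a simplex of `K`. -/
def KReal {V : Type*} [Fintype V] (K : Set (Finset V)) : Set (V → ℝ) :=
  {f | (∀ v, 0 ≤ f v) ∧ (∑ v, f v) = 1 ∧ ∃ a ∈ K, ∀ v, f v ≠ 0 ↔ v ∈ a}

/-- The barycenter of a simplex `a`, as a point of the geometric realization. -/
noncomputable def bary {V : Type*} [DecidableEq V] (a : Finset V) : V → ℝ :=
  fun v => if v ∈ a then ((a.card : ℝ))⁻¹ else 0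

/-- `|M|`: the union, over all chains of simplices of `L = K ∖ H`, of the convex hulls of
the corresponding sets of barycenters; the geometric realization of the subcomplex `M` of
the first barycentric subdivision of `K` whose vertices are barycenters of simplices
of `L`. -/
def MReal {V : Type*} [Fintype V] [DecidableEq V] (K H : Set (Finset V)) : Set (V → ℝ) :=
  ⋃ (T : Finset (Finset V)) (_ : (T : Set (Finset V)) ⊆ K \ H)
    (_ : IsChain (· ⊆ ·) (T : Set (Finset V))),
    convexHull ℝ (bary '' (T : Set (Finset V)))

noncomputable def cHi {V : Type*} (a : Finset V) (x : V → ℝ) : ℝ := by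
  classical exact if h : a.Nonempty then a.inf' h x else 0

noncomputable def cLo {V : Type*} [Fintype V] [DecidableEq V] (a : Finset V) (x : V → ℝ) : ℝ :=
  if h : a.Nonempty then
    Finset.univ.sup' ⟨h.choose, Finset.mem_univ _⟩ (fun v => if v ∈ a then 0 else x v) else 0

noncomputable def cC {V : Type*} [Fintype V] [DecidableEq V] (a : Finset V) (x : V → ℝ) : ℝ :=
  max (cHi a x - cLo a x) 0

section
variable {V : Type*} [Fintype V] [DecidableEq V]

theorem cC_nonneg (a : Finset V) (x : V → ℝ) : 0 ≤ cC a x := le_max_right _ _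

theorem cC_cont (a : Finset V) : Continuous (cC a) := by
  have h1 : Continuous (cHi a) := by
    unfold cHi
    by_cases h : a.Nonempty
    · simp only [h, dite_true]
      exact Continuous.finset_inf'_apply h (f := fun v (x : V → ℝ) => x v)
        (fun i _ => continuous_apply i)
    · simp only [h, dite_false]; exact continuous_const
  have h2 : Continuous (cLo a) := by
    unfold cLo
    by_cases h : a.Nonempty
    · simp only [h, dite_true]
      refine Continuous.finset_sup'_apply _ (f := fun v (x : V → ℝ) => if v ∈ a then 0 else x v)
        (fun i _ => ?_)
      by_cases hi : i ∈ a
      · simp only [hi, if_true]; exact continuous_const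
      · simp only [hi, if_false]; exact continuous_apply i
    · simp only [h, dite_false]; exact continuous_const
  exact (h1.sub h2).max continuous_const

theorem mem_Ioc_c {a : Finset V} {x : V → ℝ} {v : V} (hv : v ∈ a) (s : ℝ) :
    s ∈ Set.Ioc (cLo a x) (cHi a x) ↔ 0 < s ∧ ∀ u, u ∈ a ↔ s ≤ x u := by
  have h : a.Nonempty := ⟨v, hv⟩
  have hlo : cLo a x < s ↔ ∀ u, (if u ∈ a then 0 else x u) < s := by
    rw [cLo, dif_pos h]
    exact (Finset.sup'_lt_iff _).trans (by simp)
  rw [Set.mem_Ioc, hlo]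
  simp only [cHi, h, dite_true, Finset.le_inf'_iff]
  constructor
  · rintro ⟨h1, h2⟩
    refine ⟨by simpa [hv] using h1 v, fun u => ⟨h2 u, fun hu => ?_⟩⟩
    by_contra hua
    have := h1 u
    simp only [hua, if_false] at this
    linarith
  · rintro ⟨h1, h2⟩
    refine ⟨fun u => ?_, fun u hu => (h2 u).1 hu⟩
    split_ifs with hu
    · exact h1
    · exact not_le.1 (fun h' => hu ((h2 u).2 h'))

theorem cC_pos {a : Finset V} {x : V → ℝ} (h : 0 < cC a x) :
    a.Nonempty ∧ ∃ s, 0 < s ∧ ∀ u, u ∈ a ↔ s ≤ x u := by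
  have h1 : cLo a x < cHi a x := by
    by_contra hn
    rw [cC, max_eq_right (by linarith)] at h
    exact lt_irrefl _ h
  have hne : a.Nonempty := by
    by_contra hn
    simp [cLo, cHi, hn] at h1
  obtain ⟨v, hv⟩ := hne
  exact ⟨⟨v, hv⟩, _, (mem_Ioc_c hv _).1 ⟨h1, le_rfl⟩⟩

theorem cC_supp {a : Finset V} {x : V → ℝ} (hne : a.Nonempty) (h1 : ∀ v ∈ a, 0 < x v)
    (h2 : ∀ v, v ∉ a → x v = 0) : 0 < cC a x := by
  have hH : 0 < cHi a x := by
    simp only [cHi, hne, dite_true, Finset.lt_inf'_iff]; exact h1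
  have hL : cLo a x ≤ 0 := by
    rw [cLo, dif_pos hne]
    refine Finset.sup'_le _ _ fun v _ => ?_
    split_ifs with h
    · exact le_rfl
    · exact (h2 v h).le
  rw [cC]
  exact lt_max_of_lt_left (by linarith)

open MeasureTheory in
theorem cC_sum {x : V → ℝ} (hx : ∀ v, 0 ≤ x v) (v : V) :
    ∑ a ∈ Finset.univ.filter (fun a : Finset V => v ∈ a), cC a x = x v := by
  have h1 : ∀ a : Finset V, cC a x = volume.real (Set.Ioc (cLo a x) (cHi a x)) := by
    intro a; rw [Real.volume_real_Ioc, cC]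
  simp_rw [h1]
  rw [← measureReal_biUnion_finset (h := fun b _ => measure_Ioc_lt_top.ne)]
  · have : (⋃ b ∈ Finset.univ.filter (fun a : Finset V => v ∈ a),
        Set.Ioc (cLo b x) (cHi b x)) = Set.Ioc 0 (x v) := by
      ext s
      simp only [Set.mem_iUnion, Finset.mem_filter, Finset.mem_univ, true_and, exists_prop]
      constructor
      · rintro ⟨b, hb, hs⟩
        rw [mem_Ioc_c hb] at hs
        exact ⟨hs.1, (hs.2 v).1 hb⟩
      · rintro ⟨h0, h1⟩
        have hm : v ∈ Finset.univ.filter (fun u => s ≤ x u) := by simpa using h1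
        refine ⟨_, hm, (mem_Ioc_c hm s).2 ⟨h0, fun u => by simp⟩⟩
    rw [this, Real.volume_real_Ioc, sub_zero, max_eq_left (hx v)]
  · intro a ha b hb hab
    rw [Function.onFun, Set.disjoint_left]
    intro s hs hs'
    have ha' : v ∈ a := by simpa using ha
    have hb' : v ∈ b := by simpa using hb
    rw [mem_Ioc_c ha'] at hs
    rw [mem_Ioc_c hb'] at hs'
    exact hab (Finset.ext fun u => (hs.2 u).trans (hs'.2 u).symm)
  · intro b _; exact measurableSet_Ioc

theorem bary_sum {a : Finset V} (h : a.Nonempty) : ∑ v, bary a v = 1 := by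
  have : (a.card : ℝ) ≠ 0 := by simpa using h.ne_empty
  simp [bary, this]

theorem bary_nonneg (a : Finset V) (v : V) : 0 ≤ bary a v := by
  unfold bary; split_ifs <;> positivity

theorem bary_pos {a : Finset V} {v : V} (hv : v ∈ a) : 0 < bary a v := by
  have : 0 < a.card := Finset.card_pos.2 ⟨v, hv⟩
  simp only [bary, hv, if_true]; positivity

theorem bary_zero {a : Finset V} {v : V} (hv : v ∉ a) : bary a v = 0 := by
  simp [bary, hv]

theorem bary_min {m a : Finset V} (h : m ⊆ a) {u : V} (hu : u ∈ m) (v : V) :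
    bary a v ≤ bary a u := by
  unfold bary
  simp only [h hu, if_true]
  split_ifs
  · exact le_rfl
  · positivity

theorem MReal_data {K H : Set (Finset V)} (hKne : ∀ a ∈ K, a.Nonempty) {y : V → ℝ}
    (hy : y ∈ MReal K H) : ∃ m ∈ K \ H, ∃ M ∈ K \ H,
      (∀ v, 0 ≤ y v) ∧ ∑ v, y v = 1 ∧ (∀ v, y v ≠ 0 ↔ v ∈ M) ∧ ∀ u ∈ m, ∀ v, y v ≤ y u := by
  simp only [MReal, Set.mem_iUnion] at hy
  obtain ⟨T, hT, hc, hy⟩ := hy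
  rw [mem_convexHull_iff_exists_fintype] at hy
  obtain ⟨ι, _, w, z, hw, hw1, hz, rfl⟩ := hy
  choose g hg hgz using hz
  obtain rfl : z = fun i => bary (g i) := funext fun i => (hgz i).symm
  have hne : (Finset.univ.filter (fun i => 0 < w i)).Nonempty := by
    by_contra hn
    rw [Finset.not_nonempty_iff_eq_empty, Finset.filter_eq_empty_iff] at hn
    have : ∑ i, w i = 0 := Finset.sum_eq_zero fun i hi =>
      le_antisymm (not_lt.1 (hn hi)) (hw i)
    linarith
  obtain ⟨p, hp, hpm⟩ := Finset.exists_min_image _ (fun i => (g i).card) hne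
  obtain ⟨q, hq, hqm⟩ := Finset.exists_max_image _ (fun i => (g i).card) hne
  simp only [Finset.mem_filter, Finset.mem_univ, true_and] at hp hq hpm hqm
  have hsub : ∀ i j, (g i).card ≤ (g j).card → g i ⊆ g j := by
    intro i j hij
    rcases hc.total (hg i) (hg j) with h | h
    · exact h
    · exact (Finset.eq_of_subset_of_card_le h hij).symm.subset
  have hyv : ∀ v, (∑ i, w i • bary (g i)) v = ∑ i, w i * bary (g i) v := by
    intro v; simp [Finset.sum_apply]
  refine ⟨g p, hT (hg p), g q, hT (hg q), ?_, ?_, ?_, ?_⟩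
  · intro v; rw [hyv]
    exact Finset.sum_nonneg fun i _ => mul_nonneg (hw i) (bary_nonneg _ _)
  · simp_rw [hyv]
    rw [Finset.sum_comm]
    simp_rw [← Finset.mul_sum, bary_sum (hKne _ (hT (hg _)).1), mul_one, hw1]
  · intro v; rw [hyv]
    constructor
    · contrapose!
      intro hv
      refine Finset.sum_eq_zero fun i _ => ?_
      rcases (hw i).eq_or_lt with h | h
      · rw [← h, zero_mul]
      · rw [bary_zero (fun hvi => hv (hsub _ _ (hqm i h) hvi)), mul_zero]
    · intro hv
      exact (Finset.sum_pos' (fun i _ => mul_nonneg (hw i) (bary_nonneg _ _))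
        ⟨q, Finset.mem_univ _, mul_pos hq (bary_pos hv)⟩).ne'
  · intro u hu v
    rw [hyv, hyv]
    refine Finset.sum_le_sum fun i _ => ?_
    rcases (hw i).eq_or_lt with h | h
    · rw [← h, zero_mul, zero_mul]
    · exact mul_le_mul_of_nonneg_left (bary_min (hsub _ _ (hpm i h)) hu v) h.le

open Classical in
noncomputable def Lset (K H : Set (Finset V)) : Finset (Finset V) :=
  Finset.univ.filter (fun a => a ∈ K \ H)

noncomputable def lam (a : Finset V) (x : V → ℝ) : ℝ := a.card * cC a x

noncomputable def Gmap (K H : Set (Finset V)) (x : V → ℝ) : V → ℝ :=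
  (Lset K H).centerMass (fun a => lam a x) bary

theorem mem_Lset {K H : Set (Finset V)} {a : Finset V} : a ∈ Lset K H ↔ a ∈ K \ H := by
  simp [Lset]

theorem lam_nonneg (a : Finset V) (x : V → ℝ) : 0 ≤ lam a x :=
  mul_nonneg (by positivity) (cC_nonneg _ _)

theorem lam_cont (a : Finset V) : Continuous (lam a) := continuous_const.mul (cC_cont a)

theorem lam_pos {a : Finset V} {x : V → ℝ} (h : lam a x ≠ 0) : 0 < cC a x :=
  (cC_nonneg a x).lt_of_ne (fun h' => h (by rw [lam, ← h', mul_zero]))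

theorem exists_supp {K H : Set (Finset V)} (hKne : ∀ a ∈ K, a.Nonempty) {x : V → ℝ}
    (hx : x ∈ KReal K \ KReal H) :
    ∃ a ∈ K \ H, (∀ v, x v ≠ 0 ↔ v ∈ a) ∧ 0 < lam a x := by
  obtain ⟨⟨h0, h1, a, ha, hs⟩, h2⟩ := hx
  refine ⟨a, ⟨ha, fun hH => h2 ⟨h0, h1, a, hH, hs⟩⟩, hs, ?_⟩
  have := hKne a ha
  refine mul_pos (by exact_mod_cast this.card_pos) (cC_supp this ?_ ?_)
  · intro v hv; exact (h0 v).lt_of_ne ((hs v).2 hv).symm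
  · intro v hv; by_contra h; exact hv ((hs v).1 h)

theorem lam_sum_pos {K H : Set (Finset V)} (hKne : ∀ a ∈ K, a.Nonempty) {x : V → ℝ}
    (hx : x ∈ KReal K \ KReal H) : 0 < ∑ a ∈ Lset K H, lam a x := by
  obtain ⟨a, ha, -, hp⟩ := exists_supp hKne hx
  exact Finset.sum_pos' (fun i _ => lam_nonneg _ _) ⟨a, mem_Lset.2 ha, hp⟩

theorem Gmap_apply (K H : Set (Finset V)) (x : V → ℝ) (v : V) :
    Gmap K H x v = (∑ a ∈ Lset K H, lam a x)⁻¹ * ∑ a ∈ Lset K H, lam a x * bary a v := by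
  simp [Gmap, Finset.centerMass, Finset.sum_apply]

theorem Gmap_cont {K H : Set (Finset V)} (hKne : ∀ a ∈ K, a.Nonempty) :
    ContinuousOn (Gmap K H) (KReal K \ KReal H) := by
  unfold Gmap Finset.centerMass
  refine ContinuousOn.smul (ContinuousOn.inv₀ ?_ fun x hx => (lam_sum_pos hKne hx).ne') ?_
  · exact (continuous_finsetSum _ fun a _ => lam_cont a).continuousOn
  · exact (continuous_finsetSum _ fun a _ => (lam_cont a).smul continuous_const).continuousOn

theorem Gmap_mem {K H : Set (Finset V)} (hKne : ∀ a ∈ K, a.Nonempty) {x : V → ℝ}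
    (hx : x ∈ KReal K \ KReal H) : Gmap K H x ∈ MReal K H := by
  classical
  simp only [MReal, Set.mem_iUnion]
  refine ⟨(Lset K H).filter (fun a => lam a x ≠ 0), ?_, ?_, ?_⟩
  · intro a ha
    exact mem_Lset.1 (Finset.mem_filter.1 ha).1
  · intro a ha b hb _
    obtain ⟨-, s, -, hs⟩ := cC_pos (lam_pos (Finset.mem_filter.1 ha).2)
    obtain ⟨-, t, -, ht⟩ := cC_pos (lam_pos (Finset.mem_filter.1 hb).2)
    rcases le_total s t with h | h
    · right; intro u hu; exact (hs u).2 (h.trans ((ht u).1 hu))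
    · left; intro u hu; exact (ht u).2 (h.trans ((hs u).1 hu))
  · rw [Gmap, ← Finset.centerMass_filter_ne_zero]
    refine Finset.centerMass_mem_convexHull _ (fun a _ => lam_nonneg _ _) ?_ ?_
    · rw [Finset.sum_filter_ne_zero]; exact lam_sum_pos hKne hx
    · intro a ha; exact ⟨a, ha, rfl⟩

theorem Gmap_supp {K H : Set (Finset V)} {x : V → ℝ} {v : V} (hv : x v = 0) :
    Gmap K H x v = 0 := by
  rw [Gmap_apply]
  refine mul_eq_zero_of_right _ (Finset.sum_eq_zero fun a _ => ?_)
  by_cases h : lam a x = 0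
  · rw [h, zero_mul]
  · obtain ⟨-, s, h0, hs⟩ := cC_pos (lam_pos h)
    rw [bary_zero, mul_zero]
    intro hva
    have := (hs v).1 hva
    linarith

theorem MReal_sub {K H : Set (Finset V)} (hKne : ∀ a ∈ K, a.Nonempty) {y : V → ℝ}
    (hy : y ∈ MReal K H) : y ∈ KReal K \ KReal H := by
  obtain ⟨m, hm, M, hM, h0, h1, hs, -⟩ := MReal_data hKne hy
  refine ⟨⟨h0, h1, M, hM.1, hs⟩, ?_⟩
  rintro ⟨-, -, b, hb, hs'⟩
  obtain rfl : b = M := Finset.ext fun u => (hs' u).symm.trans (hs u)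
  exact hM.2 hb

theorem Gmap_fix {K H : Set (Finset V)}
    (hKne : ∀ a ∈ K, a.Nonempty)
    (hKdown : ∀ a ∈ K, ∀ b ⊆ a, b.Nonempty → b ∈ K)
    (hHdown : ∀ a ∈ H, ∀ b ⊆ a, b.Nonempty → b ∈ H) {y : V → ℝ}
    (hy : y ∈ MReal K H) : Gmap K H y = y := by
  obtain ⟨m, hm, M, hM, h0, h1, hs, hmax⟩ := MReal_data hKne hy
  have hL : ∀ a, a ∉ Lset K H → lam a y = 0 := by
    intro a ha
    by_contra h
    obtain ⟨hne, s, hs0, hsa⟩ := cC_pos (lam_pos h)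
    refine ha (mem_Lset.2 ⟨hKdown M hM.1 a (fun u hu => (hs u).1 ?_) hne, fun haH => ?_⟩)
    · have := (hsa u).1 hu
      linarith
    · refine hm.2 (hHdown a haH m (fun u hu => ?_) (hKne m hm.1))
      obtain ⟨v, hv⟩ := hne
      exact (hsa u).2 (((hsa v).1 hv).trans (hmax u hu v))
  have hsum : ∀ v, ∑ a ∈ Lset K H, lam a y * bary a v = y v := by
    intro v
    rw [Finset.sum_subset (Finset.subset_univ _)
      (fun a _ ha => by rw [hL a ha, zero_mul]), ← cC_sum h0 v, Finset.sum_filter]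
    refine Finset.sum_congr rfl fun a _ => ?_
    split_ifs with hv
    · have : (a.card : ℝ) ≠ 0 := by
        exact_mod_cast (Finset.card_pos.2 ⟨v, hv⟩).ne'
      simp only [lam, bary, hv, if_true]
      field_simp
    · rw [bary_zero hv, mul_zero]
  have hone : ∑ a ∈ Lset K H, lam a y = 1 := by
    rw [← h1]
    simp_rw [← hsum]
    rw [Finset.sum_comm]
    refine Finset.sum_congr rfl fun a ha => ?_
    rw [← Finset.mul_sum, bary_sum (hKne a (mem_Lset.1 ha).1), mul_one]
  ext v
  rw [Gmap_apply, hone, hsum, inv_one, one_mul]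

theorem F_mem {K H : Set (Finset V)} (hKne : ∀ a ∈ K, a.Nonempty) {x : V → ℝ}
    (hx : x ∈ KReal K \ KReal H) {t : ℝ} (ht : t ∈ Set.Icc (0 : ℝ) 1) :
    (1 - t) • x + t • Gmap K H x ∈ KReal K \ KReal H := by
  obtain ⟨⟨g0, g1, -⟩, -⟩ := MReal_sub hKne (Gmap_mem hKne hx)
  obtain ⟨a, ha, hs, hp⟩ := exists_supp hKne hx
  obtain ⟨x0, x1, -⟩ := hx.1
  have hG : ∀ v ∈ a, 0 < Gmap K H x v := by
    intro v hv
    rw [Gmap_apply]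
    refine mul_pos (inv_pos.2 (lam_sum_pos hKne hx)) ?_
    exact Finset.sum_pos' (fun i _ => mul_nonneg (lam_nonneg _ _) (bary_nonneg _ _))
      ⟨a, mem_Lset.2 ha, mul_pos hp (bary_pos hv)⟩
  have hsupp : ∀ v, ((1 - t) • x + t • Gmap K H x) v ≠ 0 ↔ v ∈ a := by
    intro v
    simp only [Pi.add_apply, Pi.smul_apply, smul_eq_mul]
    constructor
    · intro h
      by_contra hv
      have hxv : x v = 0 := by by_contra h'; exact hv ((hs v).1 h')
      rw [hxv, Gmap_supp hxv] at h
      simp at h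
    · intro hv
      have h1 := hG v hv
      have h2 : 0 < x v := (x0 v).lt_of_ne ((hs v).2 hv).symm
      rcases ht.1.eq_or_lt with h | h
      · rw [← h]; simp [h2.ne']
      · have := mul_pos h h1
        have := mul_nonneg (sub_nonneg.2 ht.2) h2.le
        linarith
  refine ⟨⟨fun v => ?_, ?_, a, ha.1, hsupp⟩, ?_⟩
  · exact add_nonneg (mul_nonneg (sub_nonneg.2 ht.2) (x0 v)) (mul_nonneg ht.1 (g0 v))
  · simp only [Pi.add_apply, Pi.smul_apply, smul_eq_mul, Finset.sum_add_distrib,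
      ← Finset.mul_sum, x1, g1]
    ring
  · rintro ⟨-, -, b, hb, hs'⟩
    obtain rfl : b = a := Finset.ext fun u => (hs' u).symm.trans (hsupp u)
    exact ha.2 hb

end

/-- Lemma 5.4: there is a strong deformation retraction of `|K| ∖ |H|` onto `|M|`;
in particular `|K| ∖ |H|` is homotopy equivalent to `|M|`. -/
theorem strong_deformation_retraction_onto_M
    (V : Type*) [Fintype V] [DecidableEq V] (K H : Set (Finset V))
    (hKne : ∀ a ∈ K, a.Nonempty)
    (hKdown : ∀ a ∈ K, ∀ b ⊆ a, b.Nonempty → b ∈ K)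
    (hHK : H ⊆ K)
    (hHdown : ∀ a ∈ H, ∀ b ⊆ a, b.Nonempty → b ∈ H) :
    ∃ F : (V → ℝ) × ℝ → (V → ℝ),
      ContinuousOn F ((KReal K \ KReal H) ×ˢ Set.Icc (0 : ℝ) 1) ∧
      (∀ x ∈ KReal K \ KReal H, ∀ t ∈ Set.Icc (0 : ℝ) 1, F (x, t) ∈ KReal K \ KReal H) ∧
      (∀ x ∈ KReal K \ KReal H, F (x, 0) = x) ∧
      (∀ x ∈ KReal K \ KReal H, F (x, 1) ∈ MReal K H) ∧
      (∀ y ∈ MReal K H, ∀ t ∈ Set.Icc (0 : ℝ) 1, F (y, t) = y) ∧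
      Nonempty (ContinuousMap.HomotopyEquiv ↥(KReal K \ KReal H) ↥(MReal K H)) := by
  have hFc : ContinuousOn (fun p : (V → ℝ) × ℝ => (1 - p.2) • p.1 + p.2 • Gmap K H p.1)
      ((KReal K \ KReal H) ×ˢ Set.Icc (0 : ℝ) 1) := by
    have hG : ContinuousOn (fun p : (V → ℝ) × ℝ => Gmap K H p.1)
        ((KReal K \ KReal H) ×ˢ Set.Icc (0 : ℝ) 1) :=
      (Gmap_cont hKne).comp continuousOn_fst (fun p hp => hp.1)
    exact ((continuousOn_const.sub continuousOn_snd).smul continuousOn_fst).add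
      (continuousOn_snd.smul hG)
  have hfix : ∀ y ∈ MReal K H, Gmap K H y = y := fun y hy => Gmap_fix hKne hKdown hHdown hy
  refine ⟨fun p => (1 - p.2) • p.1 + p.2 • Gmap K H p.1, hFc,
    fun x hx t ht => F_mem hKne hx ht, fun x _ => by simp,
    fun x hx => by simpa using Gmap_mem hKne hx, fun y hy t _ => ?_, ?_⟩
  · simp only [hfix y hy]
    rw [← add_smul]; simp
  · let r : C(↥(KReal K \ KReal H), ↥(MReal K H)) :=
      ⟨fun x => ⟨Gmap K H x, Gmap_mem hKne x.2⟩,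
        ((Gmap_cont hKne).domRestrict).subtype_mk _⟩
    let j : C(↥(MReal K H), ↥(KReal K \ KReal H)) :=
      ⟨fun y => ⟨y, MReal_sub hKne y.2⟩, continuous_subtype_val.subtype_mk _⟩
    have hrj : r.comp j = ContinuousMap.id _ := by
      ext1 y
      exact Subtype.ext (hfix y y.2)
    refine ⟨⟨r, j, ?_, by rw [hrj]⟩⟩
    refine ContinuousMap.Homotopic.symm ⟨⟨⟨fun p =>
      ⟨(1 - (p.1 : ℝ)) • (p.2 : V → ℝ) + (p.1 : ℝ) • Gmap K H p.2, F_mem hKne p.2.2 p.1.2⟩, ?_⟩,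
      ?_, ?_⟩⟩
    · refine Continuous.subtype_mk ?_ _
      exact hFc.comp_continuous (f := fun p : unitInterval × ↥(KReal K \ KReal H) =>
        ((p.2 : V → ℝ), (p.1 : ℝ))) (by fun_prop) (fun p => ⟨p.2.2, p.1.2⟩)
    · intro x; apply Subtype.ext; simp
    · intro x; apply Subtype.ext; simp [r, j]; rfl
end

section
/- Suppose a group G acts on the vertex set V by permutations in such a way that the induced action on subsets of V maps simplices of K to simplices of K and simplices of H to simplices of H, and let G act on |K| by (g·f)(v) = f(g⁻¹·v). Then the strong deformation retraction F of |K| ∖ |H| onto |M| can be chosen G-equivariant, i.e. F(g·x, t) = g·F(x, t) for all g ∈ G, x ∈ |K| ∖ |H|, t ∈ [0,1]. (Equivariant form of Lemma 5.4.) -/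
theorem exists_tau_aux {V : Type*} [Fintype V] (L : Set (Finset V)) (hL : L.Nonempty)
    (hne : ∀ a ∈ L, a.Nonempty) :
    ∃ τ : (V → ℝ) → ℝ, Continuous τ ∧
      ∀ x t, t ≤ τ x ↔ ∃ a ∈ L, ∀ v ∈ a, t ≤ x v := by
  classical
  let S : Finset (Finset V) := Finset.univ.filter (fun a => a ∈ L)
  have hS : S.Nonempty := by
    obtain ⟨a, ha⟩ := hL
    exact ⟨a, by simp [S, ha]⟩
  let q : Finset V → (V → ℝ) → ℝ := fun a x =>
    if h : a.Nonempty then a.inf' h (fun v => x v) else 0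
  refine ⟨fun x => S.sup' hS (fun a => q a x), ?_, ?_⟩
  · apply Continuous.finset_sup'_apply
    intro a _
    by_cases h : a.Nonempty
    · simp only [q, h, dite_true]
      apply Continuous.finset_inf'_apply
      intro v _
      exact continuous_apply v
    · simp only [q, h, dite_false]
      exact continuous_const
  · intro x t
    rw [Finset.le_sup'_iff]
    constructor
    · rintro ⟨a, ha, h⟩
      have ha' : a ∈ L := by simpa [S] using ha
      refine ⟨a, ha', ?_⟩
      simpa [q, hne a ha'] using h
    · rintro ⟨a, ha, h⟩
      refine ⟨a, by simp [S, ha], ?_⟩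
      simpa [q, hne a ha] using h

theorem bary_sum_aux {V : Type*} [Fintype V] [DecidableEq V] (a : Finset V)
    (h : a.Nonempty) : ∑ v, bary a v = 1 := by
  have : (a.card : ℝ) ≠ 0 := by
    have := h.card_pos
    positivity
  simp [bary, this]

theorem layer_aux {V : Type*} [Fintype V] [DecidableEq V] (n : ℕ) :
    ∀ y : V → ℝ, (∀ v, 0 ≤ y v) → (Finset.univ.filter (fun v => y v ≠ 0)).card ≤ n →
    ∃ (T : Finset (Finset V)) (c : Finset V → ℝ), IsChain (· ⊆ ·) (T : Set (Finset V)) ∧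
      (∀ s ∈ T, s.Nonempty ∧ (∀ v ∈ s, y v ≠ 0) ∧ ∀ w ∈ s, ∀ v, y w ≤ y v → v ∈ s) ∧
      (∀ s, 0 ≤ c s) ∧ ∀ v, y v = ∑ s ∈ T, c s * bary s v := by
  induction n with
  | zero =>
    intro y hy hc
    refine ⟨∅, fun _ => 0, by simp, by simp, by simp, ?_⟩
    intro v
    have h0 : (Finset.univ.filter (fun v => y v ≠ 0)) = ∅ := Finset.card_eq_zero.1 (by omega)
    by_contra hv
    have : v ∈ (Finset.univ.filter (fun v => y v ≠ 0)) := by simpa using hv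
    simp [h0] at this
  | succ n ih =>
    intro y hy hc
    set a := Finset.univ.filter (fun v => y v ≠ 0) with ha
    have hmem : ∀ v, v ∈ a ↔ y v ≠ 0 := by simp [ha]
    by_cases hne : a.Nonempty
    swap
    · refine ⟨∅, fun _ => 0, by simp, by simp, by simp, ?_⟩
      intro v
      by_contra hv
      exact hne ⟨v, (hmem v).2 (by simpa using hv)⟩
    obtain ⟨u, hu, hmin⟩ := a.exists_min_image y hne
    set y' : V → ℝ := fun v => if v ∈ a then y v - y u else 0 with hy'
    have hsub : ∀ v, y' v ≠ 0 → v ∈ a := by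
      intro v hv
      by_contra h
      simp [hy', h] at hv
    have hcard : (Finset.univ.filter (fun v => y' v ≠ 0)).card ≤ n := by
      have : (Finset.univ.filter (fun v => y' v ≠ 0)) ⊂ a := by
        rw [Finset.ssubset_iff_of_subset (by intro v hv; exact hsub v (by simpa using hv))]
        exact ⟨u, hu, by simp [hy']⟩
      have := Finset.card_lt_card this
      omega
    obtain ⟨T, c, hT, hs, hc0, hsum⟩ := ih y' (by
      intro v
      by_cases h : v ∈ a
      · simp [hy', h, hmin v h]
      · simp [hy', h]) hcard
    have haT : a ∉ T := fun h => (hs a h).2.1 u hu (by simp [hy'])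
    have hTa : ∀ s ∈ T, s ⊆ a := fun s h v hv => hsub v ((hs s h).2.1 v hv)
    refine ⟨insert a T, fun s => if s = a then y u * a.card else c s, ?_, ?_, ?_, ?_⟩
    · rw [Finset.coe_insert]
      exact hT.insert (fun b hb _ => Or.inr (hTa b hb))
    · intro s hsT
      rcases Finset.mem_insert.1 hsT with rfl | hsT
      · refine ⟨hne, fun v hv => (hmem v).1 hv, fun w hw v hwv => (hmem v).2 ?_⟩
        have h1 := (hmem w).1 hw
        have h2 := lt_of_le_of_ne (hy w) (Ne.symm h1)
        linarith
      · obtain ⟨h1, h2, h3⟩ := hs s hsT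
        refine ⟨h1, fun v hv => (hmem v).1 (hTa s hsT hv), fun w hw v hwv => h3 w hw v ?_⟩
        have hwa := hTa s hsT hw
        have hva : v ∈ a := by
          rw [hmem]
          have h2 := lt_of_le_of_ne (hy w) (Ne.symm ((hmem w).1 hwa))
          linarith
        simp [hy', hwa, hva, hwv]
    · intro s
      dsimp only
      split_ifs
      · exact mul_nonneg (hy u) (by positivity)
      · exact hc0 s
    · intro v
      rw [Finset.sum_insert haT]
      have : ∑ s ∈ T, (if s = a then y u * a.card else c s) * bary s v
          = ∑ s ∈ T, c s * bary s v := by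
        apply Finset.sum_congr rfl
        intro s hsT
        rw [if_neg (fun h : s = a => haT (h ▸ hsT))]
      rw [this, ← hsum v]
      have hca : (a.card : ℝ) ≠ 0 := by
        have := hne.card_pos
        positivity
      by_cases h : v ∈ a
      · simp [hy', h, bary, hca]
      · have : y v = 0 := by
          by_contra h'
          exact h ((hmem v).2 h')
        simp [hy', h, bary, this]

theorem mem_MReal_aux {V : Type*} [Fintype V] [DecidableEq V] {K H : Set (Finset V)}
    (hKne : ∀ a ∈ K, a.Nonempty)
    (hKdown : ∀ a ∈ K, ∀ b ⊆ a, b.Nonempty → b ∈ K)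
    (hHdown : ∀ a ∈ H, ∀ b ⊆ a, b.Nonempty → b ∈ H)
    {y : V → ℝ} (hy : y ∈ KReal K)
    (h : ∃ a ∈ K \ H, ∀ w ∈ a, ∀ v, y v ≤ y w) : y ∈ MReal K H := by
  obtain ⟨h0, h1, b, hb, hbs⟩ := hy
  obtain ⟨a, ha, hmax⟩ := h
  obtain ⟨T, c, hT, hs, hc, hsum⟩ := layer_aux _ y h0 le_rfl
  simp only [MReal, Set.mem_iUnion]
  refine ⟨T, ?_, hT, ?_⟩
  · intro s hsT
    obtain ⟨hsne, hs1, hs2⟩ := hs s hsT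
    refine ⟨hKdown b hb s (fun v hv => (hbs v).1 (hs1 v hv)) hsne, fun hsH => ha.2 ?_⟩
    obtain ⟨w, hw⟩ := hsne
    exact hHdown s hsH a (fun u hu => hs2 w hw u (hmax u hu w)) (hKne a ha.1)
  · have hy : y = ∑ s ∈ T, c s • bary s := by
      ext v
      simp [hsum v]
    have hc1 : ∑ s ∈ T, c s = 1 := by
      rw [← h1]
      simp_rw [hsum]
      rw [Finset.sum_comm]
      apply Finset.sum_congr rfl
      intro s hsT
      rw [← Finset.mul_sum, bary_sum_aux s (hs s hsT).1, mul_one]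
    rw [hy]
    exact (convex_convexHull ℝ _).sum_mem (fun s _ => hc s) hc1
      (fun s hsT => subset_convexHull ℝ _ ⟨s, hsT, rfl⟩)

theorem of_MReal_aux {V : Type*} [Fintype V] [DecidableEq V] {K H : Set (Finset V)}
    (hKne : ∀ a ∈ K, a.Nonempty)
    {y : V → ℝ} (hy : y ∈ MReal K H) :
    ∑ v, y v = 1 ∧ ∃ a ∈ K \ H, ∀ w ∈ a, ∀ v, y v ≤ y w := by
  simp only [MReal, Set.mem_iUnion] at hy
  obtain ⟨T, hTL, hT, hy⟩ := hy
  rw [mem_convexHull_iff_exists_fintype] at hy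
  obtain ⟨ι, _, c, z, hc, hc1, hz, rfl⟩ := hy
  choose s hsT hsz using hz
  have hzz : z = fun i => bary (s i) := funext fun i => (hsz i).symm
  subst hzz
  constructor
  · simp only [Finset.sum_apply, Pi.smul_apply, smul_eq_mul]
    rw [Finset.sum_comm, ← hc1]
    apply Finset.sum_congr rfl
    intro i _
    rw [← Finset.mul_sum, bary_sum_aux _ (hKne _ (hTL (hsT i)).1), mul_one]
  · classical
    have hP : (Finset.univ.filter (fun i => c i ≠ 0)).Nonempty := by
      by_contra h
      rw [Finset.not_nonempty_iff_eq_empty, Finset.filter_eq_empty_iff] at h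
      have : ∑ i, c i = 0 := Finset.sum_eq_zero (fun i hi => by simpa using h hi)
      linarith
    obtain ⟨i, hi, hmin⟩ := Finset.exists_min_image _ (fun i => (s i).card) hP
    refine ⟨s i, hTL (hsT i), fun w hw v => ?_⟩
    simp only [Finset.sum_apply, Pi.smul_apply, smul_eq_mul]
    apply Finset.sum_le_sum
    intro j _
    by_cases hj : c j = 0
    · simp [hj]
    have hle := hmin j (by simpa using hj)
    have hsub : s i ⊆ s j := by
      rcases hT.total (hsT i) (hsT j) with h | h
      · exact h
      · exact (Finset.eq_of_subset_of_card_le h hle).ge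
    apply mul_le_mul_of_nonneg_left _ (hc j)
    have : (0:ℝ) ≤ ((s j).card : ℝ)⁻¹ := by positivity
    simp only [bary, hsub hw, if_true]
    split_ifs <;> linarith


/-- Equivariant form of Lemma 5.4: if a group `G` acts on the vertex set `V` preserving
the simplicial complexes `K` and `H`, then the strong deformation retraction of
`|K| ∖ |H|` onto `|M|` can be chosen `G`-equivariantly, where `G` acts on `|K|` by
`(g • f)(v) = f(g⁻¹ • v)`. -/
theorem equivariant_strong_deformation_retraction_onto_M
    (V : Type*) [Fintype V] [DecidableEq V] (K H : Set (Finset V))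
    (hKne : ∀ a ∈ K, a.Nonempty)
    (hKdown : ∀ a ∈ K, ∀ b ⊆ a, b.Nonempty → b ∈ K)
    (hHK : H ⊆ K)
    (hHdown : ∀ a ∈ H, ∀ b ⊆ a, b.Nonempty → b ∈ H)
    (G : Type*) [Group G] [MulAction G V]
    (hGK : ∀ g : G, ∀ a ∈ K, Finset.image (fun v => g • v) a ∈ K)
    (hGH : ∀ g : G, ∀ a ∈ H, Finset.image (fun v => g • v) a ∈ H) :
    ∃ F : (V → ℝ) × ℝ → (V → ℝ),
      ContinuousOn F ((KReal K \ KReal H) ×ˢ Set.Icc (0 : ℝ) 1) ∧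
      (∀ x ∈ KReal K \ KReal H, ∀ t ∈ Set.Icc (0 : ℝ) 1, F (x, t) ∈ KReal K \ KReal H) ∧
      (∀ x ∈ KReal K \ KReal H, F (x, 0) = x) ∧
      (∀ x ∈ KReal K \ KReal H, F (x, 1) ∈ MReal K H) ∧
      (∀ y ∈ MReal K H, ∀ t ∈ Set.Icc (0 : ℝ) 1, F (y, t) = y) ∧
      (∀ g : G, ∀ x ∈ KReal K \ KReal H, ∀ t ∈ Set.Icc (0 : ℝ) 1,
        F (fun v => x (g⁻¹ • v), t) = fun v => F (x, t) (g⁻¹ • v)) := by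
  classical
  rcases (K \ H).eq_empty_or_nonempty with hE | hL
  · have hD : KReal K \ KReal H = ∅ := by
      ext x
      simp only [Set.mem_sdiff, Set.mem_empty_iff_false, iff_false, not_and, not_not]
      rintro ⟨h0, h1, a, ha, has⟩
      refine ⟨h0, h1, a, ?_, has⟩
      by_contra h
      exact (hE ▸ (⟨ha, h⟩ : a ∈ K \ H) : a ∈ (∅ : Set (Finset V)))
    refine ⟨fun p => p.1, continuous_fst.continuousOn, ?_, ?_, ?_, ?_, ?_⟩ <;>
      simp [hD]
  obtain ⟨τ, hτc, hτ⟩ := exists_tau_aux (K \ H) hL (fun a ha => hKne a ha.1)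
  -- points of the domain
  have hdom : ∀ x, x ∈ KReal K \ KReal H ↔ (∀ v, 0 ≤ x v) ∧ ∑ v, x v = 1 ∧
      ∃ a ∈ K \ H, ∀ v, x v ≠ 0 ↔ v ∈ a := by
    intro x
    constructor
    · rintro ⟨⟨h0, h1, a, ha, has⟩, h⟩
      exact ⟨h0, h1, a, ⟨ha, fun hH => h ⟨h0, h1, a, hH, has⟩⟩, has⟩
    · rintro ⟨h0, h1, a, ha, has⟩
      refine ⟨⟨h0, h1, a, ha.1, has⟩, ?_⟩
      rintro ⟨_, _, b, hb, hbs⟩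
      have : a = b := by
        ext v
        rw [← has, hbs]
      exact ha.2 (this ▸ hb)
  have hpos : ∀ x ∈ KReal K \ KReal H, 0 < τ x := by
    intro x hx
    obtain ⟨h0, h1, a, ha, has⟩ := (hdom x).1 hx
    obtain ⟨u, hu, hmin⟩ := a.exists_min_image x (hKne a ha.1)
    have h2 : x u ≤ τ x := (hτ x _).2 ⟨a, ha, hmin⟩
    exact lt_of_lt_of_le (lt_of_le_of_ne (h0 u) (Ne.symm ((has u).2 hu))) h2
  have hmin0 : ∀ x ∈ KReal K \ KReal H, ∀ v, 0 ≤ min (x v) (τ x) := fun x hx v =>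
    le_min (((hdom x).1 hx).1 v) (hpos x hx).le
  have hsum : ∀ x ∈ KReal K \ KReal H, 0 < ∑ v, min (x v) (τ x) := by
    intro x hx
    obtain ⟨h0, h1, a, ha, has⟩ := (hdom x).1 hx
    obtain ⟨u, hu⟩ := hKne a ha.1
    refine Finset.sum_pos' (fun v _ => hmin0 x hx v) ⟨u, Finset.mem_univ u, lt_min ?_ (hpos x hx)⟩
    exact lt_of_le_of_ne (h0 u) (Ne.symm ((has u).2 hu))
  have hmem : ∀ x ∈ KReal K \ KReal H, ∀ t ∈ Set.Icc (0 : ℝ) 1,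
      (fun v => (1 - t) * x v + t * (min (x v) (τ x) / ∑ u, min (x u) (τ x)))
        ∈ KReal K \ KReal H := by
    intro x hx t ht
    have hS := hsum x hx
    have hm := hmin0 x hx
    have hp := hpos x hx
    obtain ⟨h0, h1, a, ha, has⟩ := (hdom x).1 hx
    have ht1 : 0 ≤ 1 - t := by linarith [ht.2]
    have hq : ∀ v, 0 ≤ min (x v) (τ x) / ∑ u, min (x u) (τ x) := fun v =>
      div_nonneg (hm v) hS.le
    rw [hdom]
    refine ⟨fun v => add_nonneg (mul_nonneg ht1 (h0 v)) (mul_nonneg ht.1 (hq v)), ?_,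
      a, ha, fun v => ?_⟩
    · rw [Finset.sum_add_distrib, ← Finset.mul_sum, ← Finset.mul_sum, ← Finset.sum_div,
        div_self hS.ne', h1]
      ring
    · rw [← has v]
      constructor
      · intro h hv
        apply h
        rw [hv, min_eq_left hp.le]
        simp
      · intro hv
        have hv' : 0 < x v := lt_of_le_of_ne (h0 v) (Ne.symm hv)
        have hq' : 0 < min (x v) (τ x) / ∑ u, min (x u) (τ x) := div_pos (lt_min hv' hp) hS
        rcases ht.1.eq_or_lt with h | h
        · rw [← h]
          simpa using hv
        · have := mul_pos h hq'
          have := mul_nonneg ht1 (h0 v)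
          positivity
  refine ⟨fun p v => (1 - p.2) * p.1 v + p.2 * (min (p.1 v) (τ p.1) / ∑ u, min (p.1 u) (τ p.1)),
    ?_, hmem, ?_, ?_, ?_, ?_⟩
  · rw [continuousOn_pi]
    intro v
    have hc : ∀ u : V, Continuous fun p : (V → ℝ) × ℝ => min (p.1 u) (τ p.1) := fun u =>
      ((continuous_apply u).comp continuous_fst).min (hτc.comp continuous_fst)
    refine ContinuousOn.add (by fun_prop) (ContinuousOn.mul (by fun_prop) ?_)
    refine ContinuousOn.div (hc v).continuousOn
      (continuous_finsetSum _ fun u _ => hc u).continuousOn ?_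
    rintro ⟨x, t⟩ ⟨hx, _⟩
    exact (hsum x hx).ne'
  · intro x _
    ext v
    simp
  · intro x hx
    refine mem_MReal_aux hKne hKdown hHdown (hmem x hx 1 (by simp)).1 ?_
    obtain ⟨a, ha, hat⟩ := (hτ x (τ x)).1 le_rfl
    refine ⟨a, ha, fun w hw v => ?_⟩
    have hS := hsum x hx
    have : min (x v) (τ x) ≤ min (x w) (τ x) := by
      rw [min_eq_right (hat w hw)]
      exact min_le_right _ _
    simp only [sub_self, zero_mul, zero_add, one_mul]
    exact div_le_div_of_nonneg_right this hS.le
  · intro y hy t _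
    obtain ⟨h1, a, ha, hmax⟩ := of_MReal_aux hKne hy
    have hle : ∀ v, min (y v) (τ y) = y v := fun v =>
      min_eq_left ((hτ y _).2 ⟨a, ha, fun w hw => hmax w hw v⟩)
    ext v
    simp only [hle, h1]
    ring
  · have hle : ∀ (g : G) (x : V → ℝ), τ x ≤ τ (fun v => x (g⁻¹ • v)) := by
      intro g x
      obtain ⟨a, ha, hat⟩ := (hτ x (τ x)).1 le_rfl
      refine (hτ _ _).2 ⟨a.image (fun v => g • v), ⟨hGK g a ha.1, fun h => ha.2 ?_⟩, ?_⟩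
      · have := hGH g⁻¹ _ h
        simpa [Finset.image_image, Function.comp_def] using this
      · intro v hv
        obtain ⟨w, hw, rfl⟩ := Finset.mem_image.1 hv
        simpa using hat w hw
    have heq : ∀ (g : G) (x : V → ℝ), τ (fun v => x (g⁻¹ • v)) = τ x := by
      intro g x
      refine le_antisymm ?_ (hle g x)
      simpa using hle g⁻¹ (fun v => x (g⁻¹ • v))
    intro g x _ t _
    ext v
    simp only [heq]
    congr 3
    exact Equiv.sum_comp (MulAction.toPerm g⁻¹) (fun u => min (x u) (τ x))
end

section
/- For every integer m ≥ 1 and every integer k > m, the singular homology with rational coefficients H_k(X_m; ℚ) vanishes. (This is the genus-zero case of Harer's vanishing theorem, Theorem 5.1 of the paper: H_k(M_{0,n}; ℚ) = 0 for k > n − 3, stated via the explicit model X_{n−3} of M_{0,n}; the paper proves it by observing that X_m is an affine variety of dimension m.) -/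
open CategoryTheory

/-- The hyperplane-complement model `X_m` of the moduli space `M_{0,m+3}`:
tuples `(z_1, …, z_m)` of complex numbers with `z_a ≠ 0`, `z_a ≠ 1`, and
`z_a ≠ z_b` for `a ≠ b`. -/
def modelX (m : ℕ) : Set (Fin m → ℂ) :=
  {z | (∀ a, z a ≠ 0) ∧ (∀ a, z a ≠ 1) ∧ ∀ a b, a ≠ b → z a ≠ z b}

/-- The singular chain complex of a topological space with rational coefficients:
the alternating face map complex of the levelwise free ℚ-module on the singular
simplicial set. -/
noncomputable def singularChainComplexQ (X : TopCat.{0}) : ChainComplex (ModuleCat.{0} ℚ) ℕ :=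
  (AlgebraicTopology.alternatingFaceMapComplex (ModuleCat.{0} ℚ)).obj
    (((SimplicialObject.whiskering (Type 0) (ModuleCat.{0} ℚ)).obj
      (ModuleCat.free ℚ)).obj (TopCat.toSSet.obj X))

/-- Singular homology with rational coefficients. -/
noncomputable def singularHomologyQ (X : TopCat.{0}) (k : ℕ) : ModuleCat.{0} ℚ :=
  (singularChainComplexQ X).homology k

namespace HarerAux

/-- boundary operator of a family of face maps -/
noncomputable def bd {A B : Type} {n : ℕ} (d : Fin n → A → B) : (A →₀ ℚ) →ₗ[ℚ] (B →₀ ℚ) :=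
  ∑ i : Fin n, (-1 : ℚ) ^ (i : ℕ) • Finsupp.lmapDomain ℚ ℚ (d i)

lemma bd_apply {A B : Type} {n : ℕ} (d : Fin n → A → B) (c : A →₀ ℚ) :
    bd d c = ∑ i : Fin n, (-1 : ℚ) ^ (i : ℕ) • Finsupp.mapDomain (d i) c := by
  simp [bd]

lemma bd_nat {A B A' B' : Type} {n : ℕ} (d : Fin n → A → B) (d' : Fin n → A' → B')
    (f : A → A') (g : B → B') (h : ∀ i a, g (d i a) = d' i (f a)) (c : A →₀ ℚ) :
    Finsupp.mapDomain g (bd d c) = bd d' (Finsupp.mapDomain f c) := by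
  rw [bd_apply, bd_apply, Finsupp.mapDomain_finsetSum]
  refine Finset.sum_congr rfl fun i _ => ?_
  rw [Finsupp.mapDomain_smul, ← Finsupp.mapDomain_comp, ← Finsupp.mapDomain_comp]
  congr 2
  funext a
  exact h i a

lemma bd_supported {A B : Type} {n : ℕ} (d : Fin n → A → B) (s : Set A) (t : Set B)
    (h : ∀ i, ∀ a ∈ s, d i a ∈ t) {c : A →₀ ℚ} (hc : c ∈ Finsupp.supported ℚ ℚ s) :
    bd d c ∈ Finsupp.supported ℚ ℚ t := by
  rw [bd_apply]
  refine Submodule.sum_mem _ fun i _ => Submodule.smul_mem _ _ ?_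
  have := Finsupp.lmapDomain_supported ℚ ℚ (d i) s
  have h2 : Finsupp.lmapDomain ℚ ℚ (d i) c ∈ Finsupp.supported ℚ ℚ (d i '' s) := by
    rw [← this]; exact Submodule.mem_map_of_mem hc
  refine Finsupp.supported_mono ?_ h2
  rintro _ ⟨a, ha, rfl⟩
  exact h i a ha

/-- tuple chains -/
abbrev L (V : Type) (n : ℕ) := (Fin n → V) →₀ ℚ

variable {V W : Type}

noncomputable def dL (n : ℕ) : L V (n+1) →ₗ[ℚ] L V n :=
  bd (fun i v => v ∘ i.succAbove)

noncomputable def cone (b : V) (n : ℕ) : L V n →ₗ[ℚ] L V (n+1) :=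
  Finsupp.lmapDomain ℚ ℚ (fun v => (Fin.cons b v : Fin (n+1) → V))

lemma cone_single (b : V) (n : ℕ) (v : Fin n → V) (q : ℚ) :
    cone b n (Finsupp.single v q) = Finsupp.single (Fin.cons b v : Fin (n+1) → V) q := by
  simp [cone]

lemma cons_zero_succAbove {n : ℕ} (b : V) (v : Fin n → V) :
    (Fin.cons b v : Fin (n+1) → V) ∘ (0 : Fin (n+1)).succAbove = v := by
  funext j; simp

lemma cons_succ_succAbove {n : ℕ} (b : V) (v : Fin (n+1) → V) (i : Fin (n+1)) :
    (Fin.cons b v : Fin (n+2) → V) ∘ i.succ.succAbove =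
      (Fin.cons b (v ∘ i.succAbove) : Fin (n+1) → V) := by
  funext j
  refine Fin.cases ?_ (fun j => ?_) j
  · simp
  · simp

lemma dL_cone (b : V) (n : ℕ) (c : L V (n+1)) :
    dL (n+1) (cone b (n+1) c) = c - cone b n (dL n c) := by
  induction c using Finsupp.induction_linear with
  | zero => simp
  | add f g hf hg => simp only [map_add, hf, hg]; abel
  | single v q =>
    rw [cone_single, dL, dL, bd_apply, bd_apply, Fin.sum_univ_succ]
    simp only [Finsupp.mapDomain_single, cons_zero_succAbove, cons_succ_succAbove, map_sum,
      map_smul, cone_single]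
    simp [pow_succ, Finset.sum_neg_distrib, sub_eq_add_neg]

lemma dL_cone0 (b : V) (c : L V 0) : dL 0 (cone b 0 c) = c := by
  induction c using Finsupp.induction_linear with
  | zero => simp
  | add f g hf hg => simp only [map_add, hf, hg]
  | single v q =>
    rw [cone_single, dL, bd_apply]
    simp only [Finsupp.mapDomain_single, Fin.sum_univ_succ, Finset.univ_eq_empty,
      Finset.sum_empty, add_zero, cons_zero_succAbove]
    simp

lemma dL_dL (n : ℕ) (c : L V (n+2)) : dL n (dL (n+1) c) = 0 := by
  induction n with
  | zero =>
    induction c using Finsupp.induction_linear with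
    | zero => simp
    | add f g hf hg => simp only [map_add, hf, hg, add_zero]
    | single v q =>
      rw [← Fin.cons_self_tail v, ← cone_single, dL_cone, map_sub, dL_cone0, sub_self]
  | succ n ih =>
    induction c using Finsupp.induction_linear with
    | zero => simp
    | add f g hf hg => simp only [map_add, hf, hg, add_zero]
    | single v q =>
      rw [← Fin.cons_self_tail v, ← cone_single, dL_cone, map_sub, dL_cone, ih]
      simp

/-- functoriality of tuple chains -/
noncomputable def mp (f : V → W) (n : ℕ) : L V n →ₗ[ℚ] L W n :=
  Finsupp.lmapDomain ℚ ℚ (fun v => f ∘ v)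

lemma mp_single (f : V → W) (n : ℕ) (v : Fin n → V) (q : ℚ) :
    mp f n (Finsupp.single v q) = Finsupp.single (f ∘ v) q := by
  simp [mp]

lemma mp_dL (f : V → W) (n : ℕ) (c : L V (n+1)) : mp f n (dL n c) = dL n (mp f (n+1) c) := by
  rw [mp, mp, Finsupp.lmapDomain_apply, Finsupp.lmapDomain_apply, dL, dL]
  refine bd_nat _ _ _ _ ?_ c
  intro i a
  rfl

lemma mp_cone (f : V → W) (b : V) (n : ℕ) (c : L V n) :
    mp f (n+1) (cone b n c) = cone (f b) n (mp f n c) := by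
  induction c using Finsupp.induction_linear with
  | zero => simp
  | add f g hf hg => simp only [map_add, hf, hg]
  | single v q =>
    rw [cone_single, mp_single, mp_single, cone_single]
    congr 1
    funext j
    refine Fin.cases ?_ (fun j => ?_) j <;> simp

/-- subdivision -/
noncomputable def Sd (β : ∀ n, (Fin (n+1) → V) → V) : ∀ n, L V n →ₗ[ℚ] L V n
  | 0 => LinearMap.id
  | n+1 => Finsupp.linearCombination ℚ
      (fun v => cone (β n v) n (Sd β n (dL n (Finsupp.single v 1))))

/-- subdivision homotopy -/
noncomputable def Td (β : ∀ n, (Fin (n+1) → V) → V) : ∀ n, L V n →ₗ[ℚ] L V (n+1)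
  | 0 => 0
  | n+1 => Finsupp.linearCombination ℚ
      (fun v => cone (β n v) (n+1)
        (Finsupp.single v 1 - Td β n (dL n (Finsupp.single v 1))))

variable (β : ∀ n, (Fin (n+1) → V) → V) (γ : ∀ n, (Fin (n+1) → W) → W)

lemma Sd_single (n : ℕ) (v : Fin (n+1) → V) : Sd β (n+1) (Finsupp.single v 1) =
    cone (β n v) n (Sd β n (dL n (Finsupp.single v 1))) := by
  simp [Sd]

lemma Td_single (n : ℕ) (v : Fin (n+1) → V) : Td β (n+1) (Finsupp.single v 1) =
    cone (β n v) (n+1) (Finsupp.single v 1 - Td β n (dL n (Finsupp.single v 1))) := by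
  simp [Td]

lemma lin_ext {A M : Type} [AddCommGroup M] [Module ℚ M] (f g : (A →₀ ℚ) →ₗ[ℚ] M)
    (h : ∀ a, f (Finsupp.single a 1) = g (Finsupp.single a 1)) (c : A →₀ ℚ) : f c = g c := by
  have : f = g := by
    apply Finsupp.lhom_ext'
    intro a
    apply LinearMap.ext_ring
    exact h a
  rw [this]

lemma dL_Sd (n : ℕ) (c : L V (n+1)) : dL n (Sd β (n+1) c) = Sd β n (dL n c) := by
  induction n with
  | zero =>
    refine lin_ext (dL 0 ∘ₗ Sd β 1) (Sd β 0 ∘ₗ dL 0) (fun v => ?_) c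
    simp only [LinearMap.comp_apply, Sd_single, dL_cone0]
  | succ n ih =>
    refine lin_ext (dL (n+1) ∘ₗ Sd β (n+2)) (Sd β (n+1) ∘ₗ dL (n+1)) (fun v => ?_) c
    simp only [LinearMap.comp_apply, Sd_single _ (n+1), dL_cone, ih, dL_dL, map_zero, sub_zero]

lemma dL_Td0 (c : L V 0) : dL 0 (Td β 0 c) = c - Sd β 0 c := by
  simp [Td, Sd]

lemma dL_Td (n : ℕ) (c : L V (n+1)) :
    dL (n+1) (Td β (n+1) c) + Td β n (dL n c) = c - Sd β (n+1) c := by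
  induction n with
  | zero =>
    refine lin_ext (dL 1 ∘ₗ Td β 1 + Td β 0 ∘ₗ dL 0) (LinearMap.id - Sd β 1) (fun v => ?_) c
    simp only [LinearMap.comp_apply, LinearMap.add_apply, LinearMap.sub_apply, LinearMap.id_apply,
      Td_single, Sd_single, dL_cone, map_sub, dL_Td0]
    abel
  | succ n ih =>
    refine lin_ext (dL (n+2) ∘ₗ Td β (n+2) + Td β (n+1) ∘ₗ dL (n+1))
      (LinearMap.id - Sd β (n+2)) (fun v => ?_) c
    have h := ih (dL (n+1) (Finsupp.single v 1))
    rw [dL_dL, map_zero, add_zero] at h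
    simp only [LinearMap.comp_apply, LinearMap.add_apply, LinearMap.sub_apply, LinearMap.id_apply,
      Td_single _ (n+1), Sd_single _ (n+1), dL_cone _ (n+1), map_sub, h]
    abel

lemma mp_Sd (f : V → W) (hf : ∀ n v, f (β n v) = γ n (f ∘ v)) (n : ℕ) (c : L V n) :
    mp f n (Sd β n c) = Sd γ n (mp f n c) := by
  induction n with
  | zero => rfl
  | succ n ih =>
    refine lin_ext (mp f (n+1) ∘ₗ Sd β (n+1)) (Sd γ (n+1) ∘ₗ mp f (n+1)) (fun v => ?_) c
    simp only [LinearMap.comp_apply, mp_single, Sd_single, mp_cone, ih, mp_dL, hf]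

lemma mp_Td (f : V → W) (hf : ∀ n v, f (β n v) = γ n (f ∘ v)) (n : ℕ) (c : L V n) :
    mp f (n+1) (Td β n c) = Td γ n (mp f n c) := by
  induction n with
  | zero => simp [Td]
  | succ n ih =>
    refine lin_ext (mp f (n+2) ∘ₗ Td β (n+1)) (Td γ (n+1) ∘ₗ mp f (n+1)) (fun v => ?_) c
    simp only [LinearMap.comp_apply, mp_single, Td_single, mp_cone, map_sub, ih, mp_dL, hf]

/-- iterated subdivision -/
noncomputable def SdI (M n : ℕ) : L V n →ₗ[ℚ] L V n := (Sd β n) ^ M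

noncomputable def TdI : ∀ (_ n : ℕ), L V n →ₗ[ℚ] L V (n+1)
  | 0, _ => 0
  | M+1, n => TdI M n + Td β n ∘ₗ SdI β M n

lemma SdI_succ (M n : ℕ) (c : L V n) : SdI β (M+1) n c = Sd β n (SdI β M n c) := by
  simp [SdI, pow_succ']

lemma dL_SdI (M n : ℕ) (c : L V (n+1)) : dL n (SdI β M (n+1) c) = SdI β M n (dL n c) := by
  induction M with
  | zero => simp [SdI]
  | succ M ih => rw [SdI_succ, SdI_succ, dL_Sd, ih]

lemma dL_TdI (M n : ℕ) (c : L V (n+1)) :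
    dL (n+1) (TdI β M (n+1) c) + TdI β M n (dL n c) = c - SdI β M (n+1) c := by
  induction M with
  | zero => simp [SdI, TdI]
  | succ M ih =>
    simp only [TdI, LinearMap.add_apply, LinearMap.comp_apply, map_add, SdI_succ]
    have h := dL_Td β n (SdI β M (n+1) c)
    rw [dL_SdI] at h
    calc _ = (dL (n+1) (TdI β M (n+1) c) + TdI β M n (dL n c)) +
          (dL (n+1) (Td β (n+1) (SdI β M (n+1) c)) + Td β n (SdI β M n (dL n c))) := by abel
      _ = _ := by rw [ih, h]; abel

lemma mp_SdI (f : V → W) (hf : ∀ n v, f (β n v) = γ n (f ∘ v)) (M n : ℕ) (c : L V n) :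
    mp f n (SdI β M n c) = SdI γ M n (mp f n c) := by
  induction M with
  | zero => simp [SdI]
  | succ M ih => rw [SdI_succ, SdI_succ, mp_Sd β γ f hf, ih]

lemma mp_TdI (f : V → W) (hf : ∀ n v, f (β n v) = γ n (f ∘ v)) (M n : ℕ) (c : L V n) :
    mp f (n+1) (TdI β M n c) = TdI γ M n (mp f n c) := by
  induction M with
  | zero => simp [TdI]
  | succ M ih =>
    simp only [TdI, LinearMap.add_apply, LinearMap.comp_apply, map_add, ih, mp_Td β γ f hf,
      mp_SdI β γ f hf]

end HarerAux

namespace HarerAux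

/-- the standard simplex with `n` vertices -/
abbrev Dl (n : ℕ) : Type := ↥(stdSimplex ℝ (Fin n))

/-- convex combination -/
noncomputable def comb {n N : ℕ} (t : Dl n) (v : Fin n → Dl N) : Dl N :=
  ⟨∑ i, t.1 i • (v i).1, (convex_stdSimplex ℝ (Fin N)).sum_mem (fun i _ => t.2.1 i) t.2.2
    (fun i _ => (v i).2)⟩

lemma comb_coe {n N : ℕ} (t : Dl n) (v : Fin n → Dl N) :
    (comb t v).1 = ∑ i, t.1 i • (v i).1 := rfl

lemma comb_assoc {n N K : ℕ} (t : Dl n) (v : Fin n → Dl N) (w : Fin N → Dl K) :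
    comb (comb t v) w = comb t (fun i => comb (v i) w) := by
  apply Subtype.ext
  simp only [comb_coe, Finset.sum_apply, Pi.smul_apply, Finset.sum_smul, Finset.smul_sum,
    smul_assoc]
  exact Finset.sum_comm

/-- realization of a tuple -/
noncomputable def real {n N : ℕ} (v : Fin n → Dl N) : C(Dl n, Dl N) where
  toFun t := comb t v
  continuous_toFun := by
    refine Continuous.subtype_mk ?_ _
    refine continuous_finsetSum _ fun i _ => ?_
    exact ((continuous_apply i).comp continuous_subtype_val).smul continuous_const

lemma real_apply {n N : ℕ} (v : Fin n → Dl N) (t : Dl n) : real v t = comb t v := rfl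

/-- vertices -/
noncomputable def vx (n : ℕ) (i : Fin n) : Dl n := ⟨Pi.single i 1, single_mem_stdSimplex ℝ i⟩

lemma comb_vx {n : ℕ} (t : Dl n) : comb t (vx n) = t := by
  apply Subtype.ext
  funext j
  simp [comb_coe, vx, Pi.single_apply]

lemma vx_comb {n N : ℕ} (i : Fin n) (v : Fin n → Dl N) : comb (vx n i) v = v i := by
  apply Subtype.ext
  simp [comb_coe, vx, Pi.single_apply]

lemma real_vx (n : ℕ) : real (vx n) = ContinuousMap.id _ := by
  ext1 t
  exact comb_vx t

lemma real_comp {n N K : ℕ} (v : Fin n → Dl N) (w : Fin N → Dl K) :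
    (real w).comp (real v) = real (real w ∘ v) := by
  ext1 t
  exact comb_assoc t v w

lemma real_comp_vx {n N : ℕ} (v : Fin n → Dl N) : real v ∘ vx n = v := by
  funext i
  exact vx_comb i v

/-- face inclusion -/
noncomputable def face {n : ℕ} (i : Fin (n+1)) : C(Dl n, Dl (n+1)) :=
  real (vx (n+1) ∘ i.succAbove)

lemma real_succAbove {n N : ℕ} (v : Fin (n+1) → Dl N) (i : Fin (n+1)) :
    real (v ∘ i.succAbove) = (real v).comp (face i) := by
  rw [face, real_comp, ← Function.comp_assoc, real_comp_vx]

/-- barycenter -/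
noncomputable def bary {N : ℕ} (n : ℕ) (v : Fin (n+1) → Dl N) : Dl N :=
  comb stdSimplex.barycenter v

lemma real_bary {N K : ℕ} (w : Fin N → Dl K) (n : ℕ) (v : Fin (n+1) → Dl N) :
    real w (bary n v) = bary n (real w ∘ v) := comb_assoc _ _ _

section sing
variable {X : Type} [TopologicalSpace X]

/-- singular chains (augmented indexing) -/
abbrev SC (X : Type) [TopologicalSpace X] (n : ℕ) := C(Dl n, X) →₀ ℚ

noncomputable def dS (n : ℕ) : SC X (n+1) →ₗ[ℚ] SC X n :=
  bd (fun i σ => σ.comp (face i))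

noncomputable def pu {N : ℕ} (σ : C(Dl N, X)) (n : ℕ) : L (Dl N) n →ₗ[ℚ] SC X n :=
  Finsupp.lmapDomain ℚ ℚ (fun w => σ.comp (real w))

lemma pu_single {N : ℕ} (σ : C(Dl N, X)) (n : ℕ) (w : Fin n → Dl N) (q : ℚ) :
    pu σ n (Finsupp.single w q) = Finsupp.single (σ.comp (real w)) q := by
  simp [pu]

lemma dS_pu {N : ℕ} (σ : C(Dl N, X)) (n : ℕ) (c : L (Dl N) (n+1)) :
    dS n (pu σ (n+1) c) = pu σ n (dL n c) := by
  rw [pu, pu, Finsupp.lmapDomain_apply, Finsupp.lmapDomain_apply, dL, dS]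
  refine (bd_nat _ _ _ _ ?_ c).symm
  intro i a
  rw [real_succAbove]
  rfl

lemma pu_vx (n : ℕ) (σ : C(Dl n, X)) : pu σ n (Finsupp.single (vx n) 1) = Finsupp.single σ 1 := by
  rw [pu_single, real_vx]
  rfl

lemma pu_real {N n k : ℕ} (σ : C(Dl N, X)) (w : Fin n → Dl N) (c : L (Dl n) k) :
    pu (σ.comp (real w)) k c = pu σ k (mp (real w) k c) := by
  refine lin_ext (pu (σ.comp (real w)) k) (pu σ k ∘ₗ mp (real w) k) (fun v => ?_) c
  rw [LinearMap.comp_apply, mp_single, pu_single, pu_single, ← real_comp]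
  rfl

lemma dS_dS (n : ℕ) (c : SC X (n+2)) : dS n (dS (n+1) c) = 0 := by
  refine lin_ext (dS n ∘ₗ dS (n+1)) 0 (fun σ => ?_) c
  rw [LinearMap.comp_apply, ← pu_vx, dS_pu, dS_pu, dL_dL]
  simp

noncomputable def sdX (M n : ℕ) : SC X n →ₗ[ℚ] SC X n :=
  Finsupp.linearCombination ℚ (fun σ => pu σ n (SdI bary M n (Finsupp.single (vx n) 1)))

noncomputable def tdX (M n : ℕ) : SC X n →ₗ[ℚ] SC X (n+1) :=
  Finsupp.linearCombination ℚ (fun σ => pu σ (n+1) (TdI bary M n (Finsupp.single (vx n) 1)))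

lemma sdX_single (M n : ℕ) (σ : C(Dl n, X)) : sdX M n (Finsupp.single σ 1) =
    pu σ n (SdI bary M n (Finsupp.single (vx n) 1)) := by simp [sdX]

lemma tdX_single (M n : ℕ) (σ : C(Dl n, X)) : tdX M n (Finsupp.single σ 1) =
    pu σ (n+1) (TdI bary M n (Finsupp.single (vx n) 1)) := by simp [tdX]

lemma sdX_pu {N : ℕ} (M n : ℕ) (σ : C(Dl N, X)) (c : L (Dl N) n) :
    sdX M n (pu σ n c) = pu σ n (SdI bary M n c) := by
  refine lin_ext (sdX M n ∘ₗ pu σ n) (pu σ n ∘ₗ SdI bary M n) (fun v => ?_) c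
  rw [LinearMap.comp_apply, LinearMap.comp_apply, pu_single, sdX_single, pu_real,
    mp_SdI bary bary _ (real_bary v), mp_single, real_comp_vx]

lemma tdX_pu {N : ℕ} (M n : ℕ) (σ : C(Dl N, X)) (c : L (Dl N) n) :
    tdX M n (pu σ n c) = pu σ (n+1) (TdI bary M n c) := by
  refine lin_ext (tdX M n ∘ₗ pu σ n) (pu σ (n+1) ∘ₗ TdI bary M n) (fun v => ?_) c
  rw [LinearMap.comp_apply, LinearMap.comp_apply, pu_single, tdX_single, pu_real,
    mp_TdI bary bary _ (real_bary v), mp_single, real_comp_vx]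

lemma dS_sdX (M n : ℕ) (c : SC X (n+1)) : dS n (sdX M (n+1) c) = sdX M n (dS n c) := by
  refine lin_ext (dS n ∘ₗ sdX M (n+1)) (sdX M n ∘ₗ dS n) (fun σ => ?_) c
  rw [LinearMap.comp_apply, LinearMap.comp_apply, ← pu_vx, sdX_pu, dS_pu, dS_pu, sdX_pu, dL_SdI]

lemma dS_tdX (M n : ℕ) (c : SC X (n+1)) :
    dS (n+1) (tdX M (n+1) c) + tdX M n (dS n c) = c - sdX M (n+1) c := by
  refine lin_ext (dS (n+1) ∘ₗ tdX M (n+1) + tdX M n ∘ₗ dS n) (LinearMap.id - sdX M (n+1))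
    (fun σ => ?_) c
  rw [LinearMap.add_apply, LinearMap.comp_apply, LinearMap.comp_apply, LinearMap.sub_apply,
    LinearMap.id_apply, ← pu_vx, sdX_pu, tdX_pu, dS_pu, dS_pu, tdX_pu, ← map_add, dL_TdI, map_sub]

/-- simplices in a set -/
def inS (U : Set X) (n : ℕ) : Set C(Dl n, X) := {σ | ∀ t, σ t ∈ U}

/-- chains in a set -/
noncomputable def cS (U : Set X) (n : ℕ) : Submodule ℚ (SC X n) :=
  Finsupp.supported ℚ ℚ (inS U n)

lemma dS_mem {U : Set X} {n : ℕ} {c : SC X (n+1)} (hc : c ∈ cS U (n+1)) : dS n c ∈ cS U n :=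
  bd_supported _ (inS U (n+1)) (inS U n) (fun _ _ ha _ => ha _) hc

lemma map_supported {A M : Type} [AddCommGroup M] [Module ℚ M] (f : (A →₀ ℚ) →ₗ[ℚ] M)
    (s : Set A) (P : Submodule ℚ M) (h : ∀ a ∈ s, f (Finsupp.single a 1) ∈ P)
    {c : A →₀ ℚ} (hc : c ∈ Finsupp.supported ℚ ℚ s) : f c ∈ P := by
  rw [Finsupp.supported_eq_span_single] at hc
  have : Submodule.span ℚ ((fun i => Finsupp.single i (1:ℚ)) '' s) ≤ P.comap f := by
    rw [Submodule.span_le]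
    rintro _ ⟨a, ha, rfl⟩
    exact h a ha
  exact this hc

lemma pu_mem {U : Set X} {N n : ℕ} {σ : C(Dl N, X)} (hσ : σ ∈ inS U N) (c : L (Dl N) n) :
    pu σ n c ∈ cS U n := by
  refine map_supported (pu σ n) Set.univ _ (fun w _ => ?_) (c := c) (by simp)
  rw [pu_single]
  exact Finsupp.single_mem_supported _ _ (fun t => hσ _)

lemma sdX_mem {U : Set X} {M n : ℕ} {c : SC X n} (hc : c ∈ cS U n) : sdX M n c ∈ cS U n :=
  map_supported _ _ _ (fun σ hσ => by rw [sdX_single]; exact pu_mem hσ _) hc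

lemma tdX_mem {U : Set X} {M n : ℕ} {c : SC X n} (hc : c ∈ cS U n) : tdX M n c ∈ cS U (n+1) :=
  map_supported _ _ _ (fun σ hσ => by rw [tdX_single]; exact pu_mem hσ _) hc

end sing
end HarerAux

namespace HarerAux

lemma comb_ball {n N : ℕ} (t : Dl n) (v : Fin n → Dl N) (p : Dl N) (R : ℝ)
    (h : ∀ i, dist p (v i) ≤ R) : dist p (comb t v) ≤ R := by
  have : (comb t v).1 ∈ Metric.closedBall p.1 R := by
    rw [comb_coe]
    refine (convex_closedBall p.1 R).sum_mem (fun i _ => t.2.1 i) t.2.2 (fun i _ => ?_)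
    rw [Metric.mem_closedBall, dist_comm]
    exact h i
  rw [Metric.mem_closedBall, dist_comm] at this
  exact this

lemma bary_dist {n N : ℕ} (v : Fin (n+1) → Dl N) (d : ℝ) (h : ∀ i j, dist (v i) (v j) ≤ d)
    (j : Fin (n+1)) : dist (bary n v) (v j) ≤ n / (n+1) * d := by
  have h1 : (bary n v).1 - (v j).1 = ∑ i, ((n:ℝ)+1)⁻¹ • ((v i).1 - (v j).1) := by
    rw [bary, comb_coe, ← Finset.smul_sum, Finset.sum_sub_distrib, smul_sub, Finset.smul_sum]
    congr 1
    · refine Finset.sum_congr rfl fun i _ => ?_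
      congr 1
      simp
    · simp only [Finset.sum_const, Finset.card_univ, Fintype.card_fin, ← Nat.cast_smul_eq_nsmul ℝ,
        smul_smul]
      push_cast
      rw [inv_mul_cancel₀ (by positivity), one_smul]
  have h2 : dist (bary n v) (v j) = ‖(bary n v).1 - (v j).1‖ := by
    rw [Subtype.dist_eq, dist_eq_norm]
  rw [h2, h1, ← Finset.add_sum_erase _ _ (Finset.mem_univ j), sub_self, smul_zero, zero_add]
  refine (norm_sum_le _ _).trans ?_
  have h3 : ∀ i ∈ Finset.univ.erase j, ‖((n:ℝ)+1)⁻¹ • ((v i).1 - (v j).1)‖ ≤ ((n:ℝ)+1)⁻¹ * d := by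
    intro i _
    rw [norm_smul, Real.norm_of_nonneg (by positivity)]
    gcongr
    rw [← dist_eq_norm, ← Subtype.dist_eq]
    exact h i j
  refine (Finset.sum_le_card_nsmul _ _ _ h3).trans ?_
  rw [Finset.card_erase_of_mem (Finset.mem_univ j), Finset.card_univ, Fintype.card_fin]
  simp only [Nat.add_sub_cancel, nsmul_eq_mul]
  apply le_of_eq
  ring

lemma dL_single_supp {V : Type} {n : ℕ} (v : Fin (n+1) → V) :
    dL n (Finsupp.single v 1) ∈ Finsupp.supported ℚ ℚ {u | ∃ i : Fin (n+1), u = v ∘ i.succAbove} :=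
  bd_supported _ {v} _ (by rintro i _ rfl; exact ⟨i, rfl⟩)
    (Finsupp.single_mem_supported _ _ rfl)

lemma Sd_mesh {N : ℕ} (n : ℕ) (v : Fin n → Dl N) :
    Sd bary n (Finsupp.single v 1) ∈ Finsupp.supported ℚ ℚ {w : Fin n → Dl N |
      (∀ p R, (∀ i, dist p (v i) ≤ R) → ∀ j, dist p (w j) ≤ R) ∧
      ∀ d, (∀ i j, dist (v i) (v j) ≤ d) → ∀ i j, dist (w i) (w j) ≤ ((n:ℝ) - 1) / n * d} := by
  induction n with
  | zero =>
    exact Finsupp.single_mem_supported _ _ ⟨fun _ _ _ j => j.elim0, fun _ _ j => j.elim0⟩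
  | succ n ih =>
    rw [Sd_single]
    refine map_supported (cone (bary n v) n ∘ₗ Sd bary n) _ _ ?_ (dL_single_supp v)
    rintro _ ⟨k, rfl⟩
    refine map_supported (cone (bary n v) n) _ _ ?_ (ih (v ∘ k.succAbove))
    rintro w ⟨hw1, hw2⟩
    rw [cone_single]
    refine Finsupp.single_mem_supported _ _ ⟨?_, ?_⟩
    · intro p R h j
      refine Fin.cases ?_ (fun j => ?_) j
      · rw [Fin.cons_zero]
        exact comb_ball _ _ _ _ h
      · rw [Fin.cons_succ]
        exact hw1 p R (fun i => h _) j
    · intro d h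
      have hd : 0 ≤ d := by simpa using h 0 0
      have hb : ∀ j, dist (bary n v) (w j) ≤ n / (n+1) * d :=
        hw1 _ _ (fun i => bary_dist v d h _)
      have hc : (((n+1 : ℕ) : ℝ) - 1) / ((n+1 : ℕ):ℝ) = n / (n+1) := by
        push_cast; ring
      rw [hc]
      intro i j
      refine Fin.cases ?_ (fun i => ?_) i <;> refine Fin.cases ?_ (fun j => ?_) j
      · simp only [Fin.cons_zero, dist_self]; positivity
      · simpa only [Fin.cons_zero, Fin.cons_succ] using hb j
      · simpa only [Fin.cons_zero, Fin.cons_succ, dist_comm] using hb i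
      · simp only [Fin.cons_succ]
        refine (hw2 d (fun i j => h _ _) i j).trans ?_
        have hn : (0:ℝ) < n := by
          have := i.pos
          exact_mod_cast this
        refine mul_le_mul_of_nonneg_right ?_ hd
        rw [div_le_div_iff₀ hn (by positivity)]
        nlinarith

lemma SdI_mesh {N : ℕ} (M n : ℕ) (v : Fin n → Dl N) (d : ℝ) (h : ∀ i j, dist (v i) (v j) ≤ d) :
    SdI bary M n (Finsupp.single v 1) ∈ Finsupp.supported ℚ ℚ {w : Fin n → Dl N |
      ∀ i j, dist (w i) (w j) ≤ (((n:ℝ) - 1) / n) ^ M * d} := by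
  induction M with
  | zero => simpa [SdI] using Finsupp.single_mem_supported (M := ℚ) ℚ (s := {w : Fin n → Dl N |
      ∀ i j, dist (w i) (w j) ≤ d}) 1 h
  | succ M ih =>
    rw [SdI_succ]
    refine map_supported (Sd bary n) _ _ ?_ ih
    intro w hw
    refine Finsupp.supported_mono ?_ (Sd_mesh n w)
    rintro u ⟨_, hu⟩ i j
    refine (hu _ hw i j).trans (le_of_eq ?_)
    ring

section small
variable {X : Type} [TopologicalSpace X] {U V : Set X}

lemma small_single (hU : IsOpen U) (hV : IsOpen V) (n : ℕ) (σ : C(Dl n, X))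
    (hσ : σ ∈ inS (U ∪ V) n) : ∃ M₀, ∀ M ≥ M₀, sdX M n (Finsupp.single σ 1) ∈ cS U n ⊔ cS V n := by
  obtain ⟨δ, hδ, hL⟩ := lebesgue_number_lemma_of_metric (s := (Set.univ : Set (Dl n)))
    (c := fun b : Bool => σ ⁻¹' (if b then U else V)) isCompact_univ
    (by intro b; cases b
        · exact hV.preimage σ.continuous
        · exact hU.preimage σ.continuous)
    (by intro t _
        rcases hσ t with h | h
        · exact Set.mem_iUnion.2 ⟨true, h⟩
        · exact Set.mem_iUnion.2 ⟨false, h⟩)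
  have hr : ∃ M₀, ∀ M ≥ M₀, (((n:ℝ) - 1) / n) ^ M * 1 < δ := by
    have h0 : 0 ≤ ((n:ℝ) - 1) / n := by
      rcases Nat.eq_zero_or_pos n with rfl | hn
      · simp
      · have : (1:ℝ) ≤ n := by exact_mod_cast hn
        exact div_nonneg (by linarith) (by linarith)
    have h1 : ((n:ℝ) - 1) / n < 1 := by
      rcases Nat.eq_zero_or_pos n with rfl | hn
      · simp
      · have : (0:ℝ) < n := by exact_mod_cast hn
        rw [div_lt_one this]; linarith
    have := tendsto_pow_atTop_nhds_zero_of_lt_one h0 h1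
    have := this.eventually (gt_mem_nhds hδ)
    obtain ⟨M₀, hM⟩ := Filter.eventually_atTop.1 this
    exact ⟨M₀, fun M hM' => by rw [mul_one]; exact hM M hM'⟩
  obtain ⟨M₀, hM₀⟩ := hr
  refine ⟨M₀, fun M hM => ?_⟩
  rw [sdX_single, cS, cS, ← Finsupp.supported_union]
  refine map_supported (pu σ n) _ _ ?_ (SdI_mesh M n (vx n) 1 ?_)
  · intro w hw
    rw [pu_single]
    refine Finsupp.single_mem_supported _ _ ?_
    rcases Nat.eq_zero_or_pos n with rfl | hn
    · left
      intro t
      have := t.2.2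
      simp at this
    · have hw' : ∀ t, real w t ∈ Metric.ball (w ⟨0, hn⟩) δ := by
        intro t
        rw [Metric.mem_ball, dist_comm]
        exact (comb_ball _ _ _ _ (hw ⟨0, hn⟩)).trans_lt (hM₀ M hM)
      obtain ⟨b, hb⟩ := hL (w ⟨0, hn⟩) trivial
      cases b
      · right
        intro t
        exact hb (hw' t)
      · left
        intro t
        exact hb (hw' t)
  · intro i j
    rw [Subtype.dist_eq]
    exact (Metric.dist_le_diam_of_mem (bounded_stdSimplex (Fin n)) (vx n i).2 (vx n j).2).trans
      (diam_stdSimplex_le)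

lemma small_chain (hU : IsOpen U) (hV : IsOpen V) (n : ℕ) (c : SC X n)
    (hc : c ∈ cS (U ∪ V) n) : ∃ M₀, ∀ M ≥ M₀, sdX M n c ∈ cS U n ⊔ cS V n := by
  rw [cS, Finsupp.supported_eq_span_single] at hc
  induction hc using Submodule.span_induction with
  | mem x h =>
    obtain ⟨σ, hσ, rfl⟩ := h
    exact small_single hU hV n σ hσ
  | zero => exact ⟨0, fun M _ => by simp⟩
  | add x y _ _ hx hy =>
    obtain ⟨M₁, h₁⟩ := hx
    obtain ⟨M₂, h₂⟩ := hy
    refine ⟨max M₁ M₂, fun M hM => ?_⟩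
    rw [map_add]
    exact Submodule.add_mem _ (h₁ M ((le_max_left _ _).trans hM))
      (h₂ M ((le_max_right _ _).trans hM))
  | smul a x _ hx =>
    obtain ⟨M₁, h₁⟩ := hx
    refine ⟨M₁, fun M hM => ?_⟩
    rw [map_smul]
    exact Submodule.smul_mem _ _ (h₁ M hM)

/-- vanishing of (reduced) homology of a subset in degree `n` -/
def vanOn (U : Set X) (n : ℕ) : Prop :=
  ∀ c ∈ cS U (n+1), dS n c = 0 → ∃ e ∈ cS U (n+2), dS (n+1) e = c

lemma cS_mono {U V : Set X} (h : U ⊆ V) (n : ℕ) : cS U n ≤ cS V n :=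
  Finsupp.supported_mono fun _ hσ t => h (hσ t)

lemma cS_inter {n : ℕ} {c : SC X n} (h1 : c ∈ cS U n) (h2 : c ∈ cS V n) : c ∈ cS (U ∩ V) n := by
  have : inS (U ∩ V) n = inS U n ∩ inS V n := by
    ext σ; simp [inS, forall_and]
  rw [cS, this, Finsupp.supported_inter]
  exact ⟨h1, h2⟩

lemma mv_union (hU : IsOpen U) (hV : IsOpen V) (n : ℕ) (h1 : vanOn U (n+1)) (h2 : vanOn V (n+1))
    (h3 : vanOn (U ∩ V) n) : vanOn (U ∪ V) (n+1) := by
  intro z hz hdz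
  obtain ⟨M, hM⟩ := small_chain hU hV _ z hz
  obtain ⟨a, ha, b, hb, hab⟩ := Submodule.mem_sup.1 (hM M le_rfl)
  have ht := dS_tdX M (n+1) z
  rw [hdz, map_zero, add_zero] at ht
  have hds : dS (n+1) (sdX M (n+2) z) = 0 := by rw [dS_sdX, hdz, map_zero]
  have hd : dS (n+1) a = - dS (n+1) b := by
    rw [← hab, map_add] at hds
    exact eq_neg_of_add_eq_zero_left hds
  obtain ⟨e, he, hde⟩ := h3 (dS (n+1) a)
    (cS_inter (dS_mem ha) (by rw [hd]; exact Submodule.neg_mem _ (dS_mem hb))) (dS_dS _ _)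
  have heU := cS_mono Set.inter_subset_left _ he
  have heV := cS_mono Set.inter_subset_right _ he
  obtain ⟨p, hp, hdp⟩ := h1 (a - e) (Submodule.sub_mem _ ha heU) (by rw [map_sub, hde, sub_self])
  obtain ⟨q, hq, hdq⟩ := h2 (b + e) (Submodule.add_mem _ hb heV)
    (by rw [map_add, hde, hd, add_neg_cancel])
  refine ⟨p + q + tdX M (n+2) z, Submodule.add_mem _ (Submodule.add_mem _
    (cS_mono Set.subset_union_left _ hp) (cS_mono Set.subset_union_right _ hq)) (tdX_mem hz), ?_⟩
  rw [map_add, map_add, hdp, hdq, ht, ← hab]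
  abel

lemma mv_left (hU : IsOpen U) (hV : IsOpen V) (n : ℕ) (h1 : vanOn (U ∪ V) n)
    (h2 : vanOn (U ∩ V) n) : vanOn U n := by
  intro z hz hdz
  obtain ⟨w, hw, hdw⟩ := h1 z (cS_mono Set.subset_union_left _ hz) hdz
  obtain ⟨M, hM⟩ := small_chain hU hV _ w hw
  obtain ⟨a, ha, b, hb, hab⟩ := Submodule.mem_sup.1 (hM M le_rfl)
  have ht := dS_tdX M n z
  rw [hdz, map_zero, add_zero] at ht
  have hs : dS (n+1) a + dS (n+1) b = sdX M (n+1) z := by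
    rw [← map_add, hab, dS_sdX, hdw]
  have hbU : dS (n+1) b ∈ cS U (n+1) := by
    have : dS (n+1) b = sdX M (n+1) z - dS (n+1) a := by rw [← hs]; abel
    rw [this]
    exact Submodule.sub_mem _ (sdX_mem hz) (dS_mem ha)
  obtain ⟨e, he, hde⟩ := h2 (dS (n+1) b) (cS_inter hbU (dS_mem hb)) (dS_dS _ _)
  refine ⟨a + e + tdX M (n+1) z, Submodule.add_mem _ (Submodule.add_mem _
    ha (cS_mono Set.inter_subset_left _ he)) (tdX_mem hz), ?_⟩
  rw [map_add, map_add, hde, hs, ht]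
  abel

lemma vanOn_empty (n : ℕ) : vanOn (∅ : Set X) n := by
  intro c hc _
  have : inS (∅ : Set X) (n+1) = ∅ := by
    ext σ
    simp only [inS, Set.mem_empty_iff_false, Set.mem_ofPred_eq, iff_false, not_forall, not_false_iff]
    exact ⟨vx (n+1) 0, trivial⟩
  rw [cS, this, Finsupp.supported_empty] at hc
  rw [(Submodule.mem_bot ℚ).1 hc]
  exact ⟨0, Submodule.zero_mem _, map_zero _⟩

end small
end HarerAux

namespace HarerAux

section
variable {X Y : Type} [TopologicalSpace X] [TopologicalSpace Y]

/-- vanishing of (reduced) homology in degree `n` -/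
def van (X : Type) [TopologicalSpace X] (n : ℕ) : Prop :=
  ∀ c : SC X (n+1), dS n c = 0 → ∃ e : SC X (n+2), dS (n+1) e = c

noncomputable def mS (f : C(X, Y)) (n : ℕ) : SC X n →ₗ[ℚ] SC Y n :=
  Finsupp.lmapDomain ℚ ℚ (fun σ => f.comp σ)

lemma mS_dS (f : C(X, Y)) (n : ℕ) (c : SC X (n+1)) : mS f n (dS n c) = dS n (mS f (n+1) c) := by
  rw [mS, mS, Finsupp.lmapDomain_apply, Finsupp.lmapDomain_apply, dS, dS]
  refine bd_nat _ _ _ _ ?_ c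
  intro i a
  rfl

def incl (A : Set X) : C(A, X) := ⟨Subtype.val, continuous_subtype_val⟩

lemma mS_incl_inj (A : Set X) (n : ℕ) : Function.Injective (mS (incl A) n) := by
  refine Finsupp.mapDomain_injective ?_
  intro σ τ h
  ext1 t
  apply Subtype.ext
  exact congrArg (fun f : C(Dl n, X) => f t) h

lemma mS_incl_range (A : Set X) (n : ℕ) (c : SC X n) :
    c ∈ cS A n ↔ ∃ c' : SC A n, mS (incl A) n c' = c := by
  have h := Finsupp.lmapDomain_supported ℚ ℚ (fun σ : C(Dl n, A) => (incl A).comp σ) Set.univ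
  have h2 : (fun σ : C(Dl n, A) => (incl A).comp σ) '' Set.univ = inS A n := by
    ext σ
    constructor
    · rintro ⟨τ, _, rfl⟩ t
      exact (τ t).2
    · intro hσ
      exact ⟨⟨fun t => ⟨σ t, hσ t⟩, by fun_prop⟩, trivial, by ext1; rfl⟩
  rw [h2, Finsupp.supported_univ] at h
  rw [cS, ← h]
  simp [mS]

lemma vanOn_iff (A : Set X) (n : ℕ) : vanOn A n ↔ van A n := by
  constructor
  · intro h c hc
    obtain ⟨e, he, hde⟩ := h (mS (incl A) _ c) ((mS_incl_range _ _ _).2 ⟨c, rfl⟩)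
      (by rw [← mS_dS, hc, map_zero])
    obtain ⟨e', rfl⟩ := (mS_incl_range _ _ _).1 he
    refine ⟨e', mS_incl_inj _ _ ?_⟩
    rw [mS_dS, hde]
  · intro h c hc hdc
    obtain ⟨c', rfl⟩ := (mS_incl_range _ _ _).1 hc
    obtain ⟨e, he⟩ := h c' (mS_incl_inj _ _ (by rw [mS_dS, hdc, map_zero]))
    exact ⟨mS (incl A) _ e, (mS_incl_range _ _ _).2 ⟨e, rfl⟩, by rw [← mS_dS, he]⟩

lemma van_unique [Unique X] (n : ℕ) : van X n := by
  have hu : ∀ (k : ℕ) (σ τ : C(Dl k, X)), σ = τ := fun k σ τ => by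
    ext1 t; exact Subsingleton.elim _ _
  let u : ∀ k, C(Dl k, X) := fun k => ContinuousMap.const _ default
  let h : SC X (n+1) →ₗ[ℚ] SC X (n+2) := Finsupp.lmapDomain ℚ ℚ (fun _ => u (n+2))
  let h' : SC X n →ₗ[ℚ] SC X (n+1) := Finsupp.lmapDomain ℚ ℚ (fun _ => u (n+1))
  have key : ∀ c, dS (n+1) (h c) = c - h' (dS n c) := by
    intro c
    refine lin_ext (dS (n+1) ∘ₗ h) (LinearMap.id - h' ∘ₗ dS n) (fun σ => ?_) c
    simp only [LinearMap.comp_apply, LinearMap.sub_apply, LinearMap.id_apply, h, h',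
      Finsupp.lmapDomain_apply, Finsupp.mapDomain_single, dS, bd_apply,
      Finsupp.mapDomain_finsetSum, Finsupp.mapDomain_smul]
    rw [Fin.sum_univ_succ]
    simp only [hu _ _ (u (n+1))]
    simp [pow_succ, Finset.sum_neg_distrib, sub_eq_add_neg]
  intro c hc
  exact ⟨h c, by rw [key, hc, map_zero, sub_zero]⟩

end

/-- the singular chain complex as a functor -/
noncomputable def scF : TopCat.{0} ⥤ ChainComplex (ModuleCat.{0} ℚ) ℕ :=
  TopCat.toSSet ⋙ (SimplicialObject.whiskering (Type 0) (ModuleCat.{0} ℚ)).obj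
      (ModuleCat.free ℚ) ⋙ AlgebraicTopology.alternatingFaceMapComplex (ModuleCat.{0} ℚ)

noncomputable def scHtpy {X Y : TopCat.{0}} {f g : X ⟶ Y} (H : TopCat.Homotopy f g) :
    Homotopy (scF.map f) (scF.map g) :=
  SimplicialObject.Homotopy.toChainHomotopy
    (H.toSSet.toSimplicialObjectHomotopy.whiskerRight (ModuleCat.free ℚ))

lemma dominated {X Y : TopCat.{0}} (f : X ⟶ Y) (g : Y ⟶ X) (H : TopCat.Homotopy (𝟙 X) (f ≫ g))
    (k : ℕ) (h : Subsingleton (singularHomologyQ Y k)) : Subsingleton (singularHomologyQ X k) := by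
  have h1 := (scHtpy H).homologyMap_eq k
  rw [scF.map_id, scF.map_comp, HomologicalComplex.homologyMap_id,
    HomologicalComplex.homologyMap_comp] at h1
  have hY : Limits.IsZero ((scF.obj Y).homology k) :=
    @ModuleCat.isZero_of_subsingleton _ _ (singularHomologyQ Y k) h
  have hX : Limits.IsZero ((scF.obj X).homology k) := by
    rw [Limits.IsZero.iff_id_eq_zero, h1, hY.eq_zero_of_tgt (HomologicalComplex.homologyMap (scF.map f) k), Limits.zero_comp]
  exact ModuleCat.subsingleton_of_isZero hX

lemma face_eq {n : ℕ} (i : Fin (n+1)) (t : Dl n) : face i t = stdSimplex.map i.succAbove t := by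
  apply Subtype.ext
  funext j
  change (comb t (vx (n+1) ∘ i.succAbove)).1 j = (stdSimplex.map i.succAbove t) j
  rw [stdSimplex.map_coe, comb_coe]
  simp only [Finset.sum_apply, Pi.smul_apply, vx, Function.comp_apply, smul_eq_mul]
  rw [FunOnFinite.linearMap_apply_apply]
  simp [Pi.single_apply, Finset.sum_filter, eq_comm]
  rfl

/-- the faces of singular simplices, categorically -/
noncomputable def dK (X : Type) [TopologicalSpace X] (n : ℕ) :
    (((TopCat.toSSet.obj (TopCat.of X)).obj (Opposite.op (SimplexCategory.mk (n+1)))) →₀ ℚ) →ₗ[ℚ]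
    (((TopCat.toSSet.obj (TopCat.of X)).obj (Opposite.op (SimplexCategory.mk n))) →₀ ℚ) :=
  bd (fun i σ => SimplicialObject.δ (TopCat.toSSet.obj (TopCat.of X)) i σ)

lemma dK_eq (X : Type) [TopologicalSpace X] (n : ℕ) :
    (singularChainComplexQ (TopCat.of X)).d (n+1) n = ModuleCat.ofHom (dK X n) := by
  have h1 : (singularChainComplexQ (TopCat.of X)).d (n+1) n =
    ∑ i : Fin (n+2), (-1 : ℤ) ^ (i : ℕ) • (((SimplicialObject.whiskering (Type 0) (ModuleCat.{0} ℚ)).obj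
      (ModuleCat.free ℚ)).obj (TopCat.toSSet.obj (TopCat.of X))).δ i :=
    AlgebraicTopology.AlternatingFaceMapComplex.obj_d_eq _ _
  rw [h1]
  apply ModuleCat.hom_ext
  rw [ModuleCat.hom_sum]
  refine Finset.sum_congr rfl fun i _ => ?_
  rw [ModuleCat.hom_zsmul]
  have h3 : (-1 : ℚ) ^ (i : ℕ) = (((-1 : ℤ) ^ (i : ℕ) : ℤ) : ℚ) := by push_cast; rfl
  rw [h3]
  exact (Int.cast_smul_eq_zsmul ℚ ((-1 : ℤ) ^ (i : ℕ)) (Finsupp.lmapDomain ℚ ℚ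
    (fun σ => SimplicialObject.δ (TopCat.toSSet.obj (TopCat.of X)) i σ))).symm

lemma eqv_dK (X : Type) [TopologicalSpace X] (n : ℕ) 
    (c : (((TopCat.toSSet.obj (TopCat.of X)).obj (Opposite.op (SimplexCategory.mk (n+1)))) →₀ ℚ)) :
    Finsupp.mapDomain (TopCat.toSSetObjEquiv (TopCat.of X) (Opposite.op (SimplexCategory.mk n)))
      (dK X n c) = dS (n+1) (Finsupp.mapDomain 
        (TopCat.toSSetObjEquiv (TopCat.of X) (Opposite.op (SimplexCategory.mk (n+1)))) c) := by
  refine bd_nat _ _ _ _ ?_ c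
  intro i σ
  refine ContinuousMap.ext fun t => ?_
  rw [ContinuousMap.comp_apply, face_eq]
  rfl

lemma hom_iff (X : Type) [TopologicalSpace X] (n : ℕ) :
    Subsingleton (singularHomologyQ (TopCat.of X) (n+1)) ↔
      ∀ c, dK X n c = 0 → ∃ e, dK X (n+1) e = c := by
  rw [← ModuleCat.isZero_iff_subsingleton, singularHomologyQ,
    ← HomologicalComplex.exactAt_iff_isZero_homology,
    HomologicalComplex.exactAt_iff' _ (n+2) (n+1) n (by simp) (by simp),
    ShortComplex.moduleCat_exact_iff]
  have e1 := dK_eq X n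
  have e2 := dK_eq X (n+1)
  change (∀ c, ((singularChainComplexQ (TopCat.of X)).d (n+1) n).hom c = 0 →
    ∃ e, ((singularChainComplexQ (TopCat.of X)).d (n+2) (n+1)).hom e = c) ↔ _
  rw [e1, e2]
  exact Iff.rfl

lemma bridge (X : Type) [TopologicalSpace X] (n : ℕ) :
    Subsingleton (singularHomologyQ (TopCat.of X) (n+1)) ↔ van X (n+1) := by
  rw [hom_iff]
  have hinj : ∀ k, Function.Injective (Finsupp.mapDomain (M := ℚ)
      (TopCat.toSSetObjEquiv (TopCat.of X) (Opposite.op (SimplexCategory.mk k)))) :=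
    fun k => Finsupp.mapDomain_injective (Equiv.injective _)
  have hsurj : ∀ k, Function.Surjective (Finsupp.mapDomain (M := ℚ)
      (TopCat.toSSetObjEquiv (TopCat.of X) (Opposite.op (SimplexCategory.mk k)))) :=
    fun k => Finsupp.mapDomain_surjective (Equiv.surjective _)
  constructor
  · intro h c hc
    obtain ⟨c, rfl⟩ := hsurj (n+1) c
    obtain ⟨e, he⟩ := h c (hinj _ ((eqv_dK X n c).trans (hc.trans Finsupp.mapDomain_zero.symm)))
    exact ⟨_, (eqv_dK X (n+1) e).symm.trans (by rw [he])⟩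
  · intro h c hc
    obtain ⟨e, he⟩ := h (Finsupp.mapDomain (M := ℚ)
      (TopCat.toSSetObjEquiv (TopCat.of X) (Opposite.op (SimplexCategory.mk (n+1)))) c)
      ((eqv_dK X n c).symm.trans (by rw [hc, Finsupp.mapDomain_zero]))
    obtain ⟨e, rfl⟩ := hsurj (n+2) e
    exact ⟨e, hinj _ ((eqv_dK X (n+1) e).trans he)⟩

lemma van_dominated {X Y : Type} [TopologicalSpace X] [TopologicalSpace Y] (f : C(X, Y))
    (g : C(Y, X)) (H : ContinuousMap.Homotopy (ContinuousMap.id X) (g.comp f))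
    (k : ℕ) (h : van Y (k+1)) : van X (k+1) :=
  (bridge X k).1 (dominated (X := TopCat.of X) (Y := TopCat.of Y) (TopCat.ofHom f) (TopCat.ofHom g)
    H (k+1) ((bridge Y k).2 h))

end HarerAux

namespace HarerAux

section geom
variable {B : Type} [TopologicalSpace B]

lemma van_star (A : Set (B × ℂ)) (c : C(B, ℂ)) (hc : ∀ b, (b, c b) ∈ A)
    (hA : ∀ b z, (b, z) ∈ A → ∀ t : ℝ, 0 ≤ t → t ≤ 1 →
      (b, ((1 - t : ℝ) : ℂ) * z + (t : ℂ) * c b) ∈ A)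
    (k : ℕ) (h : van B (k+1)) : vanOn A (k+1) := by
  rw [vanOn_iff]
  let f : C(A, B) := ⟨fun p => p.1.1, by fun_prop⟩
  let g : C(B, A) := ⟨fun b => ⟨(b, c b), hc b⟩, by fun_prop⟩
  refine van_dominated f g ?_ k h
  exact
    { toFun := fun p => ⟨(p.2.1.1, ((1 - (p.1 : ℝ) : ℝ) : ℂ) * p.2.1.2 +
        ((p.1 : ℝ) : ℂ) * c p.2.1.1), hA _ _ p.2.2 _ p.1.2.1 p.1.2.2⟩
      continuous_toFun := by fun_prop
      map_zero_left := fun x => by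
        apply Subtype.ext
        simp
      map_one_left := fun x => by
        apply Subtype.ext
        simp [f, g] }

variable {ι : Type} (s : ι → C(B, ℂ))

/-- complement of sections -/
def Ec (t : Finset ι) : Set (B × ℂ) := {p | ∀ i ∈ t, p.2 ≠ s i p.1}

/-- tube around section `j` -/
def Nb (t : Finset ι) (j : ι) (D : Set ℂ) : Set (B × ℂ) :=
  {p | p.2 - s j p.1 ∈ D ∧ ∀ i ∈ t, ‖p.2 - s j p.1‖ < ‖s i p.1 - s j p.1‖}

lemma Ec_open (t : Finset ι) : IsOpen (Ec s t) := by
  have : Ec s t = ⋂ i ∈ t, {p : B × ℂ | p.2 ≠ s i p.1} := by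
    ext p; simp [Ec]
  rw [this]
  refine isOpen_biInter_finset fun i _ => ?_
  exact isOpen_ne_fun (by fun_prop) (by fun_prop)

lemma Nb_open (t : Finset ι) (j : ι) {D : Set ℂ} (hD : IsOpen D) : IsOpen (Nb s t j D) := by
  have : Nb s t j D = (fun p : B × ℂ => p.2 - s j p.1) ⁻¹' D ∩
      ⋂ i ∈ t, {p : B × ℂ | ‖p.2 - s j p.1‖ < ‖s i p.1 - s j p.1‖} := by
    ext p; simp [Nb]
  rw [this]
  refine (hD.preimage (by fun_prop)).inter (isOpen_biInter_finset fun i _ => ?_)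
  exact isOpen_lt (by fun_prop) (by fun_prop)

lemma Nb_union (t : Finset ι) (j : ι) (D D' : Set ℂ) :
    Nb s t j D ∪ Nb s t j D' = Nb s t j (D ∪ D') := by
  ext p; simp only [Nb, Set.mem_union, Set.mem_ofPred_eq]; tauto

lemma Nb_inter (t : Finset ι) (j : ι) (D D' : Set ℂ) :
    Nb s t j D ∩ Nb s t j D' = Nb s t j (D ∩ D') := by
  ext p; simp only [Nb, Set.mem_inter_iff, Set.mem_ofPred_eq]; tauto

lemma Nb_empty (t : Finset ι) (j : ι) : Nb s t j ∅ = ∅ := by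
  ext p; simp [Nb]


lemma Nb_van (hs : ∀ i j, i ≠ j → ∀ b, s i b ≠ s j b)
    (t : Finset ι) (j : ι) (hj : j ∉ t) (D : Set ℂ) (u : ℂ) (hu : ‖u‖ = 1)
    (hD1 : ∀ r : ℝ, 0 < r → (r : ℂ) * u ∈ D)
    (hD : ∀ z ∈ D, ∀ r : ℝ, 0 < r → ∀ t : ℝ, 0 ≤ t → t ≤ 1 →
      ((1 - t : ℝ) : ℂ) * z + (t : ℂ) * ((r : ℂ) * u) ∈ D)
    (k : ℕ) (h : van B (k+1)) : vanOn (Nb s t j D) (k+1) := by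
  let ε : B → ℝ := fun b => (1/2) * ∏ i ∈ t, min 1 ‖s i b - s j b‖
  have hεc : Continuous ε := by
    refine continuous_const.mul (continuous_finsetProd _ fun i _ => ?_)
    fun_prop
  have hpos : ∀ b, ∀ i ∈ t, 0 < min 1 ‖s i b - s j b‖ := by
    intro b i hi
    refine lt_min one_pos (norm_pos_iff.2 (sub_ne_zero.2 (hs i j ?_ b)))
    rintro rfl
    exact hj hi
  have hε0 : ∀ b, 0 < ε b := fun b => mul_pos (by norm_num) (Finset.prod_pos (hpos b))
  have hε1 : ∀ b, ∀ i ∈ t, ε b < ‖s i b - s j b‖ := by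
    intro b i hi
    have h1 : ∏ i ∈ t, min 1 ‖s i b - s j b‖ ≤ min 1 ‖s i b - s j b‖ := by
      classical
      rw [← Finset.mul_prod_erase t _ hi]
      refine mul_le_of_le_one_right (hpos b i hi).le ?_
      exact Finset.prod_le_one (fun i hi => (hpos b i (Finset.mem_of_mem_erase hi)).le)
        (fun i _ => min_le_left _ _)
    have h2 := min_le_right 1 ‖s i b - s j b‖
    have h3 := hpos b i hi
    simp only [ε]
    linarith
  have hn : ∀ b, ‖(ε b : ℂ) * u‖ = ε b := by
    intro b
    rw [norm_mul, hu, mul_one, Complex.norm_real, Real.norm_of_nonneg (hε0 b).le]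
  refine van_star _ ⟨fun b => s j b + (ε b : ℂ) * u, by fun_prop⟩ ?_ ?_ k h
  · intro b
    refine ⟨?_, fun i hi => ?_⟩
    · simpa using hD1 _ (hε0 b)
    · simp only [ContinuousMap.coe_mk, add_sub_cancel_left]
      rw [hn]
      exact hε1 b i hi
  · rintro b z ⟨hz1, hz2⟩ τ h0 h1
    have he : ((1 - τ : ℝ) : ℂ) * z + (τ : ℂ) * (s j b + (ε b : ℂ) * u) - s j b =
        ((1 - τ : ℝ) : ℂ) * (z - s j b) + (τ : ℂ) * ((ε b : ℂ) * u) := by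
      push_cast; ring
    refine ⟨?_, fun i hi => ?_⟩
    · simp only [ContinuousMap.coe_mk]
      rw [he]
      exact hD _ hz1 _ (hε0 b) τ h0 h1
    · simp only [ContinuousMap.coe_mk]
      rw [he]
      have := (convex_ball (0:ℂ) ‖s i b - s j b‖) (x := z - s j b) (by simpa using hz2 i hi)
        (y := (ε b : ℂ) * u) (by rw [mem_ball_zero_iff, hn]; exact hε1 b i hi)
        (sub_nonneg.2 h1) h0 (by ring)
      rw [mem_ball_zero_iff, Complex.real_smul, Complex.real_smul] at this
      exact this

lemma Nb_star_van (hs : ∀ i j, i ≠ j → ∀ b, s i b ≠ s j b)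
    (t : Finset ι) (j : ι) (hj : j ∉ t) (k : ℕ) (h1 : van B (k+1))
    (h2 : van B (k+2)) : vanOn (Nb s t j {z | z ≠ 0}) (k+2) := by
  have hup : vanOn (Nb s t j {z | 0 < z.im}) (k+1) := by
    refine Nb_van s hs t j hj _ Complex.I (by simp) (fun r hr => by simpa using hr) ?_ k h1
    intro z hz r hr τ h0 h1
    simp only [Set.mem_ofPred_eq] at hz ⊢
    simp
    rcases h1.lt_or_eq with h | h
    · have := mul_pos (sub_pos.2 h) hz
      have := mul_nonneg h0 hr.le
      linarith
    · subst h; simpa using hr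
  have hdn : vanOn (Nb s t j {z | z.im < 0}) (k+1) := by
    refine Nb_van s hs t j hj _ (-Complex.I) (by simp) (fun r hr => by simpa using hr) ?_ k h1
    intro z hz r hr τ h0 h1
    simp only [Set.mem_ofPred_eq] at hz ⊢
    simp
    rcases h1.lt_or_eq with h | h
    · have := mul_neg_of_pos_of_neg (sub_pos.2 h) hz
      have := mul_nonneg h0 hr.le
      linarith
    · subst h; simpa using hr
  have hR : vanOn (Nb s t j {z | 0 < z.re ∨ z.im ≠ 0}) (k+2) := by
    refine Nb_van s hs t j hj _ 1 (by simp) (fun r hr => by left; simpa using hr) ?_ (k+1) h2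
    intro z hz r hr τ h0 h1
    simp only [Set.mem_ofPred_eq] at hz ⊢
    simp
    rcases h1.lt_or_eq with h | h
    · rcases hz with hz | hz
      · left
        have := mul_pos (sub_pos.2 h) hz
        have := mul_nonneg h0 hr.le
        linarith
      · right
        exact ⟨(sub_pos.2 h).ne', hz⟩
    · subst h; left; simpa using hr
  have hLf : vanOn (Nb s t j {z | z.re < 0 ∨ z.im ≠ 0}) (k+2) := by
    refine Nb_van s hs t j hj _ (-1) (by simp) (fun r hr => by left; simpa using hr) ?_ (k+1) h2
    intro z hz r hr τ h0 h1
    simp only [Set.mem_ofPred_eq] at hz ⊢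
    simp
    rcases h1.lt_or_eq with h | h
    · rcases hz with hz | hz
      · left
        have := mul_neg_of_pos_of_neg (sub_pos.2 h) hz
        have := mul_nonneg h0 hr.le
        linarith
      · right
        exact ⟨(sub_pos.2 h).ne', hz⟩
    · subst h; left; simpa using hr
  have oup : IsOpen {z : ℂ | 0 < z.im} := isOpen_lt continuous_const Complex.continuous_im
  have odn : IsOpen {z : ℂ | z.im < 0} := isOpen_lt Complex.continuous_im continuous_const
  have oim : IsOpen {z : ℂ | z.im ≠ 0} := isOpen_ne_fun Complex.continuous_im continuous_const
  have oR : IsOpen {z : ℂ | 0 < z.re ∨ z.im ≠ 0} :=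
    (isOpen_lt continuous_const Complex.continuous_re).union oim
  have oL : IsOpen {z : ℂ | z.re < 0 ∨ z.im ≠ 0} :=
    (isOpen_lt Complex.continuous_re continuous_const).union oim
  have e1 : ({z : ℂ | z ≠ 0} : Set ℂ) = {z | 0 < z.re ∨ z.im ≠ 0} ∪ {z | z.re < 0 ∨ z.im ≠ 0} := by
    ext z
    simp only [Set.mem_union, Set.mem_ofPred_eq, ne_eq, Complex.ext_iff, Complex.zero_re,
      Complex.zero_im]
    constructor
    · intro h
      rcases lt_trichotomy z.re 0 with h' | h' | h'
      · tauto
      · tauto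
      · tauto
    · rintro (h | h) ⟨a, b⟩ <;> rw [a, b] at h <;> simp at h
  have e2 : ({z : ℂ | 0 < z.re ∨ z.im ≠ 0} ∩ {z | z.re < 0 ∨ z.im ≠ 0} : Set ℂ) =
      {z | 0 < z.im} ∪ {z | z.im < 0} := by
    ext z
    simp only [Set.mem_union, Set.mem_inter_iff, Set.mem_ofPred_eq]
    constructor
    · rintro ⟨h1 | h1, h2 | h2⟩
      · exact absurd h1 h2.not_gt
      all_goals rcases lt_or_gt_of_ne ‹z.im ≠ 0› with h | h <;> tauto
    · rintro (h | h)
      · exact ⟨Or.inr h.ne', Or.inr h.ne'⟩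
      · exact ⟨Or.inr h.ne, Or.inr h.ne⟩
  have e3 : ({z : ℂ | 0 < z.im} ∩ {z | z.im < 0} : Set ℂ) = ∅ := by
    ext z
    simp only [Set.mem_inter_iff, Set.mem_ofPred_eq, Set.mem_empty_iff_false, iff_false]
    rintro ⟨h1, h2⟩
    exact absurd h1 h2.not_gt
  rw [e1, ← Nb_union]
  refine mv_union (Nb_open s t j oR) (Nb_open s t j oL) (k+1) hR hLf ?_
  rw [Nb_inter, e2, ← Nb_union]
  refine mv_union (Nb_open s t j oup) (Nb_open s t j odn) k hup hdn ?_
  rw [Nb_inter, e3, Nb_empty]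
  exact vanOn_empty _

lemma Ec_van (hs : ∀ i j, i ≠ j → ∀ b, s i b ≠ s j b)
    (t : Finset ι) (k : ℕ) (h1 : van B (k+1)) (h2 : van B (k+2)) :
    vanOn (Ec s t) (k+2) := by
  classical
  induction t using Finset.induction_on with
  | empty =>
    refine van_star _ (ContinuousMap.const _ 0) ?_ ?_ (k+1) h2
    · intro b; simp [Ec]
    · intros; simp [Ec]
  | insert j t hj ih =>
    have e1 : Ec s (insert j t) ∪ Nb s t j Set.univ = Ec s t := by
      ext ⟨b, z⟩
      simp only [Ec, Nb, Set.mem_union, Set.mem_ofPred_eq, Finset.forall_mem_insert, Set.mem_univ,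
        true_and]
      constructor
      · rintro (h | h)
        · exact h.2
        · intro i hi he
          have := h i hi
          rw [he] at this
          exact lt_irrefl _ this
      · intro h
        by_cases hz : z = s j b
        · right
          intro i hi
          rw [hz, sub_self, norm_zero]
          refine norm_pos_iff.2 (sub_ne_zero.2 (hs i j ?_ b))
          rintro rfl
          exact hj hi
        · exact Or.inl ⟨hz, h⟩
    have e2 : Ec s (insert j t) ∩ Nb s t j Set.univ = Nb s t j {z | z ≠ 0} := by
      ext ⟨b, z⟩
      simp only [Ec, Nb, Set.mem_inter_iff, Set.mem_ofPred_eq, Finset.forall_mem_insert,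
        Set.mem_univ, true_and]
      constructor
      · rintro ⟨h, h'⟩
        exact ⟨sub_ne_zero.2 h.1, h'⟩
      · rintro ⟨h, h'⟩
        refine ⟨⟨sub_ne_zero.1 h, ?_⟩, h'⟩
        intro i hi he
        have := h' i hi
        rw [he] at this
        exact lt_irrefl _ this
    refine mv_left (Ec_open s _) (Nb_open s t j isOpen_univ) (k+2) ?_ ?_
    · rw [e1]; exact ih
    · rw [e2]; exact Nb_star_van s hs t j hj k h1 h2

end geom

/-- the sections for the tower of configuration spaces -/
noncomputable def sec (m : ℕ) : Option (Option (Fin m)) → C(modelX m, ℂ)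
  | none => ContinuousMap.const _ 0
  | some none => ContinuousMap.const _ 1
  | some (some a) => ⟨fun z => z.1 a, (continuous_apply a).comp continuous_subtype_val⟩

lemma sec_ne (m : ℕ) (i j : Option (Option (Fin m))) (h : i ≠ j) (b : modelX m) :
    sec m i b ≠ sec m j b := by
  obtain ⟨z, h0, h1, h2⟩ := b
  rcases i with _ | _ | a <;> rcases j with _ | _ | a'
  · exact absurd rfl h
  · simp [sec]
  · exact (h0 a').symm
  · simp [sec]
  · exact absurd rfl h
  · exact (h1 a').symm
  · exact h0 a
  · exact h1 a
  · exact h2 a a' (fun e => h (by rw [e]))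

lemma snoc_mem (m : ℕ) (p : Ec (sec m) Finset.univ) :
    (Fin.snoc (α := fun _ => ℂ) p.1.1.1 p.1.2 : Fin (m+1) → ℂ) ∈ modelX (m+1) := by
  obtain ⟨⟨⟨z, h0, h1, h2⟩, w⟩, hp⟩ := p
  have hp' : ∀ i, w ≠ sec m i ⟨z, h0, h1, h2⟩ := fun i => hp i (Finset.mem_univ i)
  refine ⟨fun a => ?_, fun a => ?_, fun a b => ?_⟩
  · refine Fin.lastCases ?_ (fun a => ?_) a
    · simpa [sec] using hp' none
    · simpa using h0 a
  · refine Fin.lastCases ?_ (fun a => ?_) a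
    · simpa [sec] using hp' (some none)
    · simpa using h1 a
  · refine Fin.lastCases ?_ (fun a => ?_) a <;> refine Fin.lastCases ?_ (fun b => ?_) b
    · intro h; exact absurd rfl h
    · intro _
      simpa [sec] using hp' (some (some b))
    · intro _
      simpa [sec] using (hp' (some (some a))).symm
    · intro h
      simpa using h2 a b (fun e => h (by rw [e]))

lemma init_mem (m : ℕ) (z : modelX (m+1)) : (fun a : Fin m => z.1 a.castSucc) ∈ modelX m := by
  obtain ⟨z, h0, h1, h2⟩ := z
  exact ⟨fun a => h0 _, fun a => h1 _, fun a b h => h2 _ _ (fun e => h (Fin.castSucc_injective _ e))⟩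

lemma pair_mem (m : ℕ) (z : modelX (m+1)) :
    ((⟨_, init_mem m z⟩, z.1 (Fin.last m)) : modelX m × ℂ) ∈ Ec (sec m) Finset.univ := by
  obtain ⟨z, h0, h1, h2⟩ := z
  rintro (_ | _ | a) _
  · exact h0 _
  · exact h1 _
  · exact h2 _ _ (Fin.castSucc_lt_last a).ne'

lemma model_van (m : ℕ) : ∀ k, m < k → van (modelX m) k := by
  induction m with
  | zero =>
    intro k _
    have : Unique (modelX 0) :=
      { default := ⟨fun a => a.elim0, fun a => a.elim0, fun a => a.elim0, fun a => a.elim0⟩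
        uniq := fun z => Subtype.ext (funext fun a => a.elim0) }
    exact van_unique k
  | succ m ih =>
    intro k hk
    obtain ⟨k, rfl⟩ : ∃ l, k = l + 2 := ⟨k - 2, by omega⟩
    have h := (vanOn_iff _ _).1
      (Ec_van (sec m) (sec_ne m) Finset.univ k (ih _ (by omega)) (ih _ (by omega)))
    let f : C(modelX (m+1), Ec (sec m) Finset.univ) :=
      ⟨fun z => ⟨(⟨_, init_mem m z⟩, z.1 (Fin.last m)), pair_mem m z⟩,
        Continuous.subtype_mk (Continuous.prodMk (Continuous.subtype_mk (continuous_pi fun a =>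
          (continuous_apply _).comp continuous_subtype_val) _)
          ((continuous_apply _).comp continuous_subtype_val)) _⟩
    let g : C(Ec (sec m) Finset.univ, modelX (m+1)) :=
      ⟨fun p => ⟨_, snoc_mem m p⟩, by
        refine Continuous.subtype_mk ?_ _
        refine continuous_pi fun a => ?_
        refine Fin.lastCases ?_ (fun a => ?_) a
        · simp only [Fin.snoc_last]; fun_prop
        · simp only [Fin.snoc_castSucc]
          exact (continuous_apply a).comp
            (continuous_subtype_val.comp (continuous_fst.comp continuous_subtype_val))⟩
    have hgf : ContinuousMap.id _ = g.comp f := by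
      ext1 z
      apply Subtype.ext
      funext a
      refine Fin.lastCases ?_ (fun a => ?_) a
      · simp [f, g]
      · simp [f, g]
    refine van_dominated f g ?_ (k+1) h
    rw [← hgf]
    exact ContinuousMap.Homotopy.refl _

end HarerAux

/-- Genus-zero case of Harer's vanishing theorem (Theorem 5.1):
`H_k(M_{0,m+3}; ℚ) = H_k(X_m; ℚ) = 0` for `k > m`. -/
theorem singularHomologyQ_modelX_eq_zero (m : ℕ) (hm : 1 ≤ m) (k : ℕ) (hk : m < k) :
    Subsingleton (singularHomologyQ (TopCat.of (modelX m)) k) := by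
  obtain ⟨k, rfl⟩ : ∃ l, k = l + 1 := ⟨k - 1, by omega⟩
  exact (HarerAux.bridge _ k).2 (HarerAux.model_van m _ hk)
end
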